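/- arXiv:math/0303061 — 2 statements merged into one kernel-verified Lean document; each statement's English description precedes it below -/
import Mathlib

section
/- Let q, α, β, γ ∈ ℂ with q ≠ 0, q^i ≠ 1 for all integers i ≥ 1, α ≠ 0, β ≠ 0, γ ≠ 0, αβ ≠ q^i for all integers i, and γ ≠ q^i for all integers i. Then for all nonnegative integers X, Y, Z: (α;q)_X (β;q)_Y (q/γ;q)_Z (γ;q)_{X+Y−Z} / ((q;q)_X (q;q)_Y (q;q)_Z (αβ;q)_{X+Y−Z}) = ∑ q^{kn−in+m} · α^k β^{k−i−m} γ^{−k} · (β;q)_n (γ;q)_n (γq^n;q)_i (βq^n;q)_j (q^{1−n}/(αβ);q)_k (α/γ;q)_l (q^{−n};q)_m / ((αβ;q)_n (q;q)_n (q;q)_i (q;q)_j (q;q)_k (q;q)_l (q;q)_m), where the (finite) sum ranges over all nonnegative integers i, j, k, l, m, n satisfying i+l+m = X, j+n−m = Y and j+k+l = Z. (This is the equality of coefficients of x^X y^Y z^Z in a second formal q-analogue of the Gelfand–Graev–Retakh identity.) -/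
open Finset

/-- The `q`-shifted factorial `(a;q)_n` for an arbitrary integer `n`. -/
noncomputable def qpoch (q a : ℂ) (n : ℤ) : ℂ :=
  if 0 ≤ n then ∏ i ∈ Finset.range n.toNat, (1 - a * q ^ (i : ℤ))
  else (∏ i ∈ Finset.range (-n).toNat, (1 - a * q ^ (n + (i : ℤ))))⁻¹

/-!
Fix `l`, `M = i + m` and `R = j + k`. The sum over `m` is a `q`-Chu–Vandermonde sum, because the
powers of `q`, `α`, `β` absorb the reflection of `(q^{-n};q)_m` and `(q^{1-n}/(αβ);q)_k`. The result
is, as a function of `k`, the summand of the other `q`-Chu–Vandermonde sum, and once `k` is summed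
out the sum over `l` is a `q`-Pfaff–Saalschütz sum terminated by a parameter `q^{-Z}`. Both
Chu–Vandermonde sums are specializations of a homogeneous form of the Saalschütz sum, which follows
by induction on its length from a Pascal-type recurrence for its terms.
-/

section CommRing

variable {R : Type*} [CommRing R]

/-- The `q`-analogue `∏_{i < n} (a - b q^i)` of `(a - b)^n`. The `q`-shifted factorial `(b;q)_n` is
`qPow q 1 b n`; the second base makes limits such as `b → ∞` available by specialization. -/
def qPow (q a b : R) (n : ℕ) : R := ∏ i ∈ range n, (a - b * q ^ i)

@[simp]
lemma qPow_zero (q a b : R) : qPow q a b 0 = 1 := prod_range_zero _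

lemma qPow_succ (q a b : R) (n : ℕ) : qPow q a b (n + 1) = qPow q a b n * (a - b * q ^ n) :=
  prod_range_succ _ _

lemma qPow_add (q a b : R) (m n : ℕ) :
    qPow q a b (m + n) = qPow q a b m * qPow q a (b * q ^ m) n := by
  simp only [qPow, prod_range_add, pow_add, mul_assoc]

lemma qPow_succ' (q a b : R) (n : ℕ) : qPow q a b (n + 1) = (a - b) * qPow q a (b * q) n := by
  rw [add_comm, qPow_add, qPow_succ, qPow_zero, pow_zero, pow_one, mul_one, one_mul]

lemma qPow_mul_mul (q c a b : R) (n : ℕ) : qPow q (c * a) (c * b) n = c ^ n * qPow q a b n := by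
  simp only [qPow, mul_assoc, ← mul_sub, prod_mul_distrib, prod_const, card_range]

lemma qPow_zero_right (q a : R) (n : ℕ) : qPow q a 0 n = a ^ n := by
  simp [qPow]

lemma qPow_zero_left (q b : R) (n : ℕ) : qPow q 0 b n = (-b) ^ n * q ^ n.choose 2 := by
  induction n with
  | zero => simp
  | succ n ih =>
    rw [qPow_succ, ih, Nat.choose_succ_succ' n 1, Nat.choose_one_right]
    ring

lemma qPow_reverse (q a b : R) (n : ℕ) :
    qPow q (a * q ^ n) (b * q) n = (-1) ^ n * q ^ (n + 1).choose 2 * qPow q b a n := by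
  induction n generalizing a with
  | zero => simp
  | succ n ih =>
    rw [qPow_succ, pow_succ' q n, ← mul_assoc, ih, qPow_succ', Nat.choose_succ_succ' (n + 1) 1,
      Nat.choose_one_right]
    ring

end CommRing

lemma mul_sum_antidiagonal_succ {R : Type*} [CommSemiring R] (n : ℕ) (c : R) (t x y : ℕ → ℕ → R)
    (left : c * t 0 (n + 1) = x 0 n) (right : c * t (n + 1) 0 = y n 0)
    (inner : ∀ k i, k + i + 1 = n → c * t (k + 1) (i + 1) = x (k + 1) i + y k (i + 1)) :
    c * ∑ p ∈ antidiagonal (n + 1), t p.1 p.2 = ∑ p ∈ antidiagonal n, (x p.1 p.2 + y p.1 p.2) := by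
  rw [Nat.sum_antidiagonal_succ, sum_add_distrib]
  cases n with
  | zero => simp [mul_add, left, right]
  | succ n =>
    rw [Nat.sum_antidiagonal_succ', Nat.sum_antidiagonal_succ (f := fun p => x p.1 p.2),
      Nat.sum_antidiagonal_succ' (f := fun p => y p.1 p.2), mul_add, mul_add, left, right, mul_sum,
      sum_congr rfl fun p hp => inner p.1 p.2 (by rw [mem_antidiagonal.1 hp]), sum_add_distrib]
    ring

section Field

variable {K : Type*} [Field K] {q : K}

lemma one_sub_pow_succ_ne_zero (hq1 : ∀ i : ℕ, 1 ≤ i → q ^ i ≠ 1) (n : ℕ) : 1 - q * q ^ n ≠ 0 := by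
  rw [← pow_succ']
  exact sub_ne_zero.2 (hq1 (n + 1) n.succ_pos).symm

lemma qPow_self_ne_zero (hq1 : ∀ i : ℕ, 1 ≤ i → q ^ i ≠ 1) (n : ℕ) : qPow q 1 q n ≠ 0 :=
  prod_ne_zero_iff.2 fun i _ => one_sub_pow_succ_ne_zero hq1 i

/-- With `b = c e / u`, dividing by `(c;q)_n ∏_{i < n} (a e - u q^i)` gives the classical balanced
`₃φ₂` sum with upper parameters `a, b, q^{-n}` and lower parameters `c, a b q^{1-n} / c`. This
homogeneous form also allows `e = 0` and `u = 0`, which yield the two `q`-Chu–Vandermonde sums. -/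
theorem qSaalschutz (hq1 : ∀ i : ℕ, 1 ≤ i → q ^ i ≠ 1) (a c e u : K) (n : ℕ) :
    ∑ p ∈ antidiagonal n, qPow q 1 a p.1 * qPow q 1 (c * q ^ p.1) p.2 * qPow q u (c * e) p.1 *
        qPow q (a * e) u p.2 / (qPow q 1 q p.1 * qPow q 1 q p.2) =
      qPow q a c n * qPow q e u n / qPow q 1 q n := by
  induction n with
  | zero => simp
  | succ n ih =>
    have hn := one_sub_pow_succ_ne_zero hq1 n
    let t (k i : ℕ) : K := qPow q 1 a k * qPow q 1 (c * q ^ k) i * qPow q u (c * e) k *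
      qPow q (a * e) u i / (qPow q 1 q k * qPow q 1 q i)
    have pascal := mul_sum_antidiagonal_succ n (1 - q * q ^ n) t
      (fun k i => (1 - c * q ^ (n + k)) * (a * e - u * q ^ i) * t k i)
      (fun k i => q ^ i * (1 - a * q ^ k) * (u - c * e * q ^ k) * t k i) ?_ ?_ ?_
    · have weights : ∀ p ∈ antidiagonal n,
          (1 - c * q ^ (n + p.1)) * (a * e - u * q ^ p.2) * t p.1 p.2 +
            q ^ p.2 * (1 - a * q ^ p.1) * (u - c * e * q ^ p.1) * t p.1 p.2 =
          (a - c * q ^ n) * (e - u * q ^ n) * t p.1 p.2 := by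
        intro p hp
        rw [← mem_antidiagonal.1 hp]
        ring
      rw [sum_congr rfl weights, ← mul_sum, ih] at pascal
      refine mul_left_cancel₀ hn (pascal.trans ?_)
      simp only [qPow_succ]
      rw [mul_div_assoc', mul_div_assoc', mul_comm (qPow q 1 q n), mul_div_mul_left _ _ hn]
      ring
    · simp only [t, qPow_succ, qPow_zero, pow_zero, add_zero]
      have := qPow_self_ne_zero hq1 n
      field_simp
    · simp only [t, qPow_succ, qPow_zero, pow_zero]
      have := qPow_self_ne_zero hq1 n
      field_simp
    · rintro k i rfl
      have := qPow_self_ne_zero hq1 k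
      have := qPow_self_ne_zero hq1 i
      have := one_sub_pow_succ_ne_zero hq1 k
      have := one_sub_pow_succ_ne_zero hq1 i
      have shift : qPow q 1 (c * q ^ k) (i + 1) =
          (1 - c * q ^ k) * qPow q 1 (c * q ^ (k + 1)) i := by
        rw [qPow_succ', mul_assoc, ← pow_succ]
      simp only [t]
      rw [shift]
      simp only [qPow_succ]
      field_simp
      ring

lemma choose_two_succ_add_choose_two_add (m i : ℕ) :
    (m + 1).choose 2 + (m + i).choose 2 = i.choose 2 + m * (m + i) := by
  induction m with
  | zero => simp
  | succ m ih =>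
    have : (m + 1 + i).choose 2 = (m + i) + (m + i).choose 2 := by
      rw [add_right_comm, Nat.choose_succ_succ' _ 1, Nat.choose_one_right]
    rw [Nat.choose_succ_succ' (m + 1) 1, Nat.choose_one_right, this]
    linear_combination ih

lemma qPow_div_mul_pow (hq : q ≠ 0) {a : K} (ha : a ≠ 0) (k : ℕ) :
    qPow q 1 (q / (a * q ^ k)) k =
      ((a * q ^ k) ^ k)⁻¹ * ((-1) ^ k * q ^ (k + 1).choose 2 * qPow q 1 a k) := by
  have hak : a * q ^ k ≠ 0 := mul_ne_zero ha (pow_ne_zero k hq)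
  rw [eq_inv_mul_iff_mul_eq₀ (pow_ne_zero k hak), ← qPow_mul_mul, mul_one, mul_div_cancel₀ _ hak,
    ← qPow_reverse, one_mul]

lemma qChuVandermonde (hq : q ≠ 0) (hq1 : ∀ i : ℕ, 1 ≤ i → q ^ i ≠ 1) (a c : K) (n : ℕ) :
    ∑ p ∈ antidiagonal n, (-1) ^ p.1 * q ^ (p.1 + 1).choose 2 * (q ^ (p.1 * n))⁻¹ *
        qPow q 1 a p.1 * qPow q 1 (c * q ^ p.1) p.2 / (qPow q 1 q p.1 * qPow q 1 q p.2) =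
      qPow q a c n / qPow q 1 q n := by
  have saalschutz := qSaalschutz hq1 a c 0 (-1) n
  simp only [mul_zero, qPow_zero_right, qPow_zero_left, neg_neg, one_pow, one_mul] at saalschutz
  have hn := pow_ne_zero (n.choose 2) hq
  refine mul_left_cancel₀ hn ?_
  rw [mul_div_assoc', mul_comm (q ^ _) (qPow q a c n), ← saalschutz, mul_sum]
  refine sum_congr rfl fun p hp => ?_
  obtain rfl := mem_antidiagonal.1 hp
  have h := congrArg (q ^ ·) (choose_two_succ_add_choose_two_add p.1 p.2)
  simp only [pow_add q] at h
  rw [mul_div_assoc']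
  congr 1
  have := pow_ne_zero (p.1 * (p.1 + p.2)) hq
  field_simp
  linear_combination qPow q 1 a p.1 * qPow q 1 (c * q ^ p.1) p.2 * h

lemma qChuVandermonde_reversed (hq1 : ∀ i : ℕ, 1 ≤ i → q ^ i ≠ 1) (a b : K) {c : K} (hc : c ≠ 0)
    (n : ℕ) :
    ∑ p ∈ antidiagonal n, qPow q 1 (c * a) p.1 * qPow q 1 (c * b * q ^ p.1) p.2 *
        qPow q 0 b p.1 * a ^ p.2 / (qPow q 1 q p.1 * qPow q 1 q p.2) =
      qPow q a b n / qPow q 1 q n := by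
  have saalschutz := qSaalschutz hq1 (c * a) (c * b) c⁻¹ 0 n
  simp only [mul_right_comm c _ c⁻¹, mul_inv_cancel₀ hc, one_mul, qPow_zero_right] at saalschutz
  rw [saalschutz, qPow_mul_mul, mul_right_comm, ← mul_pow, mul_inv_cancel₀ hc, one_pow, one_mul]

lemma qPow_inv_pow_eq_zero (hq : q ≠ 0) {m n : ℕ} (h : n < m) : qPow q 1 (q ^ n)⁻¹ m = 0 :=
  prod_eq_zero (mem_range.2 h) (by rw [inv_mul_cancel₀ (pow_ne_zero n hq), sub_self])

lemma qPow_inv_pow (hq : q ≠ 0) (l r : ℕ) :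
    q ^ (l * (l + r + 1)) * (qPow q 1 q r * qPow q 1 (q ^ (l + r))⁻¹ l) =
      (-1) ^ l * q ^ (l + 1).choose 2 * qPow q 1 q (l + r) := by
  have h := qPow_div_mul_pow hq (pow_ne_zero (r + 1) hq) l
  have base : q ^ (r + 1) * q ^ l = q ^ (l + r) * q := by ring
  rw [base, div_mul_cancel_right₀ hq] at h
  have split : qPow q 1 q (l + r) = qPow q 1 q r * qPow q 1 (q ^ (r + 1)) l := by
    rw [add_comm l r, qPow_add, pow_succ']
  have := pow_ne_zero (l * (l + r + 1)) hq
  rw [h, split, ← pow_succ, ← pow_mul, mul_comm _ l]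
  field_simp

lemma qPow_reflect_cancel (hq : q ≠ 0) (g : K) (l r s : ℕ) :
    qPow q (g * q ^ (l + r) * q ^ s) q r * qPow q 1 q (l + r) * qPow q 1 g (l + s) =
      qPow q 1 q r * qPow q (g * q ^ (l + r)) q (l + r) * qPow q 1 (q ^ (l + r))⁻¹ l *
        qPow q 1 (g * q ^ (l + r)) s := by
  have reflect (a : K) (n : ℕ) :
      qPow q (a * q ^ n) q n = (-1) ^ n * q ^ (n + 1).choose 2 * qPow q 1 a n := by
    simpa only [one_mul] using qPow_reverse q a 1 n
  have base : g * q ^ (l + r) * q ^ s = g * q ^ (l + s) * q ^ r := by ring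
  have split : qPow q 1 g (l + s) * qPow q 1 (g * q ^ (l + s)) r =
      qPow q 1 g (l + r) * qPow q 1 (g * q ^ (l + r)) s := by
    rw [← qPow_add, ← qPow_add, add_right_comm]
  have exponent : q ^ (l + 1).choose 2 * q ^ (l + r + 1).choose 2 =
      q ^ (r + 1).choose 2 * q ^ (l * (l + r + 1)) := by
    rw [← pow_add, ← pow_add, add_assoc l r 1, choose_two_succ_add_choose_two_add]
  have sign : (-1 : K) ^ (l + r) * (-1) ^ l = (-1) ^ r := by
    rw [add_comm, pow_add, mul_assoc, ← mul_pow, neg_one_mul, neg_neg, one_pow, mul_one]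
  refine mul_left_cancel₀ (pow_ne_zero (l * (l + r + 1)) hq) ?_
  rw [base, reflect, reflect]
  calc
    _ = (-1) ^ r * (q ^ (r + 1).choose 2 * q ^ (l * (l + r + 1))) * qPow q 1 q (l + r) *
          (qPow q 1 g (l + s) * qPow q 1 (g * q ^ (l + s)) r) := by ring
    _ = (-1) ^ (l + r) * q ^ (l + r + 1).choose 2 *
          ((-1) ^ l * q ^ (l + 1).choose 2 * qPow q 1 q (l + r)) *
          (qPow q 1 g (l + r) * qPow q 1 (g * q ^ (l + r)) s) := by
      rw [← exponent, ← sign, split]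
      ring
    _ = _ := by
      rw [← qPow_inv_pow hq]
      ring

lemma qSaalschutz_inv_pow (hq : q ≠ 0) (hq1 : ∀ i : ℕ, 1 ≤ i → q ^ i ≠ 1) (α g : K) (X Z : ℕ) :
    ∑ p ∈ antidiagonal X with p.1 ≤ Z, qPow q 1 (q ^ Z)⁻¹ p.1 *
        qPow q 1 ((q ^ Z)⁻¹ * α * q ^ p.1) p.2 * qPow q (g * q ^ Z) α p.1 *
        qPow q 1 (g * q ^ Z) p.2 / (qPow q 1 q p.1 * qPow q 1 q p.2) =
      qPow q 1 α X * qPow q 1 g X / qPow q 1 q X := by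
  have hZ := pow_ne_zero Z hq
  rw [sum_filter_of_ne]
  · have saalschutz := qSaalschutz hq1 (q ^ Z)⁻¹ ((q ^ Z)⁻¹ * α) (q ^ Z) (q ^ Z * g) X
    have scale_left := qPow_mul_mul q (q ^ Z)⁻¹ 1 α X
    have scale_right := qPow_mul_mul q (q ^ Z) 1 g X
    rw [mul_one] at scale_left scale_right
    rw [scale_left, scale_right, mul_mul_mul_comm, ← mul_pow, inv_mul_cancel₀ hZ, one_pow,
      one_mul] at saalschutz
    simpa only [mul_right_comm _ α, inv_mul_cancel₀ hZ, one_mul, mul_comm _ g] using saalschutz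
  · intro p _ hp
    contrapose! hp
    rw [qPow_inv_pow_eq_zero hq hp]
    simp only [zero_mul, zero_div]

lemma qPow_mul_zpow_ne_zero (hq : q ≠ 0) {a : K} (ha : ∀ i : ℤ, a ≠ q ^ i) (n : ℤ) (m : ℕ) :
    qPow q 1 (a * q ^ n) m ≠ 0 := by
  refine prod_ne_zero_iff.2 fun i _ h => ha (-(n + i)) ?_
  rw [zpow_neg]
  refine eq_inv_of_mul_eq_one_left ?_
  rw [zpow_add₀ hq, zpow_natCast, ← mul_assoc]
  exact (sub_eq_zero.1 h).symm

lemma qSaalschutz_reflect (hq : q ≠ 0) (hq1 : ∀ i : ℕ, 1 ≤ i → q ^ i ≠ 1) (α : K) {γ : K}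
    (hγ : ∀ i : ℤ, γ ≠ q ^ i) (X Z : ℕ) :
    ∑ p ∈ antidiagonal X with p.1 ≤ Z,
        qPow q γ α p.1 * qPow q 1 (α * (q ^ (Z - p.1))⁻¹) p.2 *
          qPow q (γ * q ^ p.2) q (Z - p.1) /
          (qPow q 1 q p.1 * qPow q 1 q p.2 * qPow q 1 q (Z - p.1)) =
      qPow q 1 α X * qPow q γ q Z / (qPow q 1 q X * qPow q 1 q Z) := by
  have hZ := pow_ne_zero Z hq
  obtain ⟨g, rfl⟩ : ∃ g, γ = g * q ^ Z := ⟨γ * (q ^ Z)⁻¹, (inv_mul_cancel_right₀ hZ γ).symm⟩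
  have hg : qPow q 1 g X ≠ 0 := by
    simpa only [zpow_neg, zpow_natCast, mul_inv_cancel_right₀ hZ] using
      qPow_mul_zpow_ne_zero hq hγ (-Z) X
  refine mul_right_cancel₀ hg ?_
  calc
    _ = qPow q (g * q ^ Z) q Z / qPow q 1 q Z * (qPow q 1 α X * qPow q 1 g X / qPow q 1 q X) := by
      rw [← qSaalschutz_inv_pow hq hq1 α g X Z, sum_mul, mul_sum]
      refine sum_congr rfl fun ⟨l, s⟩ hp => ?_
      obtain ⟨hX, hlZ⟩ := mem_filter.1 hp
      obtain rfl : l + s = X := mem_antidiagonal.1 hX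
      obtain ⟨r, rfl⟩ : ∃ r, Z = l + r := Nat.exists_eq_add_of_le hlZ
      have base : (q ^ (l + r))⁻¹ * α * q ^ l = α * (q ^ r)⁻¹ := by
        have := pow_ne_zero l hq
        rw [pow_add]
        field_simp
      have hqq := qPow_self_ne_zero hq1
      simp only [base, Nat.add_sub_cancel_left]
      rw [div_mul_eq_mul_div, div_mul_div_comm,
        div_eq_div_iff (mul_ne_zero (mul_ne_zero (hqq l) (hqq s)) (hqq r))
          (mul_ne_zero (hqq (l + r)) (mul_ne_zero (hqq l) (hqq s)))]
      linear_combination qPow q (g * q ^ (l + r)) α l * qPow q 1 (α * (q ^ r)⁻¹) s *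
        qPow q 1 q l * qPow q 1 q s * qPow_reflect_cancel hq g l r s
    _ = _ := by ring

lemma qChuVandermonde_truncated (hq : q ≠ 0) (hq1 : ∀ i : ℕ, 1 ≤ i → q ^ i ≠ 1) (a : K)
    (R Y : ℕ) :
    ∑ p ∈ antidiagonal R with p.2 ≤ Y, (-1) ^ p.1 * q ^ (p.1 + 1).choose 2 *
        qPow q 1 (a * q ^ ((Y : ℤ) - R)) p.1 * a ^ p.2 /
        (qPow q 1 q p.1 * qPow q 1 q p.2 * qPow q 1 q (Y - p.2)) =
      qPow q a q R / (qPow q 1 q R * qPow q 1 q Y) := by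
  have vandermonde := qChuVandermonde_reversed hq1 a q (zpow_ne_zero ((Y : ℤ) - R) hq) R
  rw [← sum_filter_of_ne (p := fun p => p.2 ≤ Y)] at vandermonde
  · rw [← div_div, ← vandermonde, sum_div]
    refine sum_congr rfl fun ⟨k, j⟩ hp => ?_
    obtain ⟨hR, hjY⟩ := mem_filter.1 hp
    obtain rfl : k + j = R := mem_antidiagonal.1 hR
    obtain ⟨p, rfl⟩ : ∃ p, Y = p + j := Nat.exists_eq_add_of_le' hjY
    have base : q ^ (((p + j : ℕ) : ℤ) - (k + j : ℕ)) * q * q ^ k = q * q ^ p := by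
      rw [mul_right_comm, ← zpow_natCast, ← zpow_add₀ hq, mul_comm q, ← zpow_natCast q p]
      congr 2
      push_cast
      ring
    have hqq := qPow_self_ne_zero hq1
    have sign : qPow q 0 q k = (-1) ^ k * q ^ (k + 1).choose 2 := by
      rw [qPow_zero_left, neg_pow, Nat.choose_succ_succ' k 1, Nat.choose_one_right, pow_add,
        mul_assoc]
    have split := qPow_add q 1 q p j
    have : qPow q 1 (q * q ^ p) j ≠ 0 := right_ne_zero_of_mul (split ▸ hqq (p + j))
    simp only [base, sign, split, Nat.add_sub_cancel]
    rw [mul_comm a, div_div, ← mul_div_mul_right _ _ this]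
    ring
  · rintro ⟨k, j⟩ hR hp
    obtain rfl : k + j = R := mem_antidiagonal.1 hR
    contrapose! hp
    obtain ⟨d, rfl⟩ : ∃ d, j = Y + 1 + d := Nat.exists_eq_add_of_le hp
    have base : q ^ ((Y : ℤ) - (k + (Y + 1 + d) : ℕ)) * q * q ^ k = (q ^ d)⁻¹ := by
      rw [← zpow_natCast, ← zpow_natCast, ← zpow_add_one₀ hq, ← zpow_add₀ hq, ← zpow_neg]
      congr 1
      push_cast
      ring
    simp only [base]
    rw [qPow_inv_pow_eq_zero hq (by lia)]
    simp only [mul_zero, zero_mul, zero_div]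

/-- The `q`-shifted factorial `(a;q)_n` with integer index over an arbitrary field; over `ℂ` it is
definitionally `qpoch`. -/
def qShiftedFactorial (q a : K) (n : ℤ) : K :=
  if 0 ≤ n then ∏ i ∈ range n.toNat, (1 - a * q ^ (i : ℤ))
  else (∏ i ∈ range (-n).toNat, (1 - a * q ^ (n + (i : ℤ))))⁻¹

lemma qShiftedFactorial_natCast (q a : K) (n : ℕ) : qShiftedFactorial q a n = qPow q 1 a n := by
  simp [qShiftedFactorial, qPow]

lemma qShiftedFactorial_neg_natCast (hq : q ≠ 0) (a : K) (n : ℕ) :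
    qShiftedFactorial q a (-n) = (qPow q 1 (a * q ^ (-n : ℤ)) n)⁻¹ := by
  rcases n.eq_zero_or_pos with rfl | hn
  · simp [qShiftedFactorial]
  · simp [qShiftedFactorial, qPow, hn.ne', zpow_add₀ hq, mul_assoc]

lemma qShiftedFactorial_ne_zero (hq : q ≠ 0) {a : K} (ha : ∀ i : ℤ, a ≠ q ^ i) (n : ℤ) :
    qShiftedFactorial q a n ≠ 0 := by
  obtain ⟨m, rfl | rfl⟩ := n.eq_nat_or_neg
  · simpa [qShiftedFactorial_natCast] using qPow_mul_zpow_ne_zero hq ha 0 m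
  · rw [qShiftedFactorial_neg_natCast hq]
    exact inv_ne_zero (qPow_mul_zpow_ne_zero hq ha _ m)

lemma qShiftedFactorial_add_natCast (hq : q ≠ 0) {a : K} (ha : ∀ i : ℤ, a ≠ q ^ i) (n : ℤ) (m : ℕ) :
    qShiftedFactorial q a (n + m) = qShiftedFactorial q a n * qPow q 1 (a * q ^ n) m := by
  obtain ⟨t, rfl | rfl⟩ := n.eq_nat_or_neg
  · rw [← Nat.cast_add, qShiftedFactorial_natCast, qShiftedFactorial_natCast, qPow_add,
      zpow_natCast]
  · rw [qShiftedFactorial_neg_natCast hq,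
      eq_inv_mul_iff_mul_eq₀ (qPow_mul_zpow_ne_zero hq ha _ t)]
    rcases le_total t m with h | h
    · obtain ⟨s, rfl⟩ := Nat.exists_eq_add_of_le h
      rw [qPow_add, mul_assoc a, ← zpow_natCast q t, ← zpow_add₀ hq, Nat.cast_add,
        neg_add_cancel_left, neg_add_cancel, zpow_zero, mul_one, qShiftedFactorial_natCast]
    · obtain ⟨s, rfl⟩ := Nat.exists_eq_add_of_le h
      have cancel : (-(m + s : ℕ) + m : ℤ) = -s := by
        push_cast
        ring
      have := qPow_mul_zpow_ne_zero hq ha (-s) s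
      rw [qPow_add, mul_assoc a, ← zpow_natCast q m, ← zpow_add₀ hq, cancel,
        qShiftedFactorial_neg_natCast hq, mul_inv_cancel_right₀ this]

/-- The summand, indexed by `(i, j, k, l, m, n)`, of the coefficient of `x^X y^Y z^Z` in the
`q`-analogue of the Gelfand–Graev–Retakh identity; it does not depend on `X`, `Y` and `Z`. -/
def ggrSummand (q α β γ : K) (i j k l m n : ℕ) : K :=
  q ^ ((k : ℤ) * n - (i : ℤ) * n + (m : ℤ)) *
    α ^ (k : ℤ) * β ^ ((k : ℤ) - (i : ℤ) - (m : ℤ)) * γ ^ (-(k : ℤ)) *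
    (qShiftedFactorial q β n * qShiftedFactorial q γ n * qShiftedFactorial q (γ * q ^ (n : ℤ)) i *
      qShiftedFactorial q (β * q ^ (n : ℤ)) j *
      qShiftedFactorial q (q ^ (1 - (n : ℤ)) / (α * β)) k *
      qShiftedFactorial q (α / γ) l *
      qShiftedFactorial q (q ^ (-(n : ℤ))) m) /
    (qShiftedFactorial q (α * β) n * qShiftedFactorial q q n * qShiftedFactorial q q i *
      qShiftedFactorial q q j * qShiftedFactorial q q k * qShiftedFactorial q q l *
      qShiftedFactorial q q m)

lemma ggrSummand_eq_zero_of_lt (hq : q ≠ 0) (α β γ : K) (i j k l : ℕ) {m n : ℕ} (h : n < m) :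
    ggrSummand q α β γ i j k l m n = 0 := by
  have : qShiftedFactorial q (q ^ (-(n : ℤ))) m = 0 := by
    rw [qShiftedFactorial_natCast, zpow_neg, zpow_natCast, qPow_inv_pow_eq_zero hq h]
  rw [ggrSummand, this, mul_zero, mul_zero, zero_div]

lemma qPow_zpow_one_sub_div (hq : q ≠ 0) {a : K} (ha : ∀ i : ℤ, a ≠ q ^ i) (ha0 : a ≠ 0)
    (n k : ℕ) :
    qPow q 1 (q ^ (1 - (n : ℤ)) / a) k / qPow q 1 a n =
      (-1) ^ k * q ^ (k + 1).choose 2 /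
        ((a * q ^ n) ^ k * qShiftedFactorial q a ((n : ℤ) - k)) := by
  have hbase := mul_ne_zero ha0 (zpow_ne_zero ((n : ℤ) - k) hq)
  have h := qPow_div_mul_pow hq hbase k
  have shift : a * q ^ ((n : ℤ) - k) * q ^ k = a * q ^ n := by
    rw [mul_assoc, ← zpow_natCast q k, ← zpow_add₀ hq, sub_add_cancel, zpow_natCast]
  have base : q ^ (1 - (n : ℤ)) / a = q / (a * q ^ n) := by
    rw [zpow_one_sub_natCast₀ hq, div_div, mul_comm]
  have split := qShiftedFactorial_add_natCast hq ha ((n : ℤ) - k) k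
  rw [sub_add_cancel, qShiftedFactorial_natCast] at split
  rw [shift, ← base] at h
  have := qPow_mul_zpow_ne_zero hq ha ((n : ℤ) - k) k
  have := qShiftedFactorial_ne_zero hq ha ((n : ℤ) - k)
  have := pow_ne_zero k (mul_ne_zero ha0 (pow_ne_zero n hq))
  rw [h, split]
  field_simp

lemma qPow_inv_pow_div (hq : q ≠ 0) (hq1 : ∀ i : ℕ, 1 ≤ i → q ^ i ≠ 1) (m p : ℕ) :
    qPow q 1 (q ^ (-((p + m : ℕ) : ℤ))) m / qPow q 1 q (p + m) =
      (-1) ^ m * q ^ (m + 1).choose 2 / (q ^ (m * (m + p + 1)) * qPow q 1 q p) := by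
  have h := qPow_inv_pow hq m p
  have := pow_ne_zero (m * (m + p + 1)) hq
  rw [zpow_neg, zpow_natCast, add_comm p m,
    div_eq_div_iff (qPow_self_ne_zero hq1 _) (mul_ne_zero this (qPow_self_ne_zero hq1 p)), ← h]
  ring

lemma ggrSummand_power (hq : q ≠ 0) {α β : K} (hα : α ≠ 0) (hβ : β ≠ 0) (γ : K) (i k m p : ℕ) :
    q ^ ((k : ℤ) * (p + m : ℕ) - (i : ℤ) * (p + m : ℕ) + (m : ℤ)) * α ^ (k : ℤ) *
        β ^ ((k : ℤ) - (i : ℤ) - (m : ℤ)) * γ ^ (-(k : ℤ)) /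
        ((α * β * q ^ (p + m)) ^ k * q ^ (m * (m + p + 1))) =
      (γ ^ k * (β * q ^ p) ^ (m + i) * q ^ (m * (m + i)))⁻¹ := by
  have exponent : (k : ℤ) * (p + m : ℕ) - (i : ℤ) * (p + m : ℕ) + (m : ℤ) =
      ((p + m) * k + m * (m + p + 1) : ℕ) - (p * (m + i) + m * (m + i) : ℕ) := by
    push_cast
    ring
  rw [exponent, zpow_sub₀ hq, sub_sub, zpow_sub₀ hβ, ← Nat.cast_add, zpow_neg]
  simp only [zpow_natCast, mul_pow, ← pow_mul, pow_add q, add_mul, add_comm i m]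
  field_simp

lemma ggrSummand_eq_qPow (q α β γ : K) (i j k l m n : ℕ) :
    ggrSummand q α β γ i j k l m n =
      q ^ ((k : ℤ) * n - (i : ℤ) * n + (m : ℤ)) * α ^ (k : ℤ) *
        β ^ ((k : ℤ) - (i : ℤ) - (m : ℤ)) * γ ^ (-(k : ℤ)) *
        (qPow q 1 β n * qPow q 1 (β * q ^ n) j) * (qPow q 1 γ n * qPow q 1 (γ * q ^ n) i) *
        qPow q 1 (α / γ) l * (qPow q 1 (q ^ (1 - (n : ℤ)) / (α * β)) k / qPow q 1 (α * β) n) *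
        (qPow q 1 (q ^ (-(n : ℤ))) m / qPow q 1 q n) /
        (qPow q 1 q i * qPow q 1 q j * qPow q 1 q k * qPow q 1 q l * qPow q 1 q m) := by
  simp only [ggrSummand, qShiftedFactorial_natCast, zpow_natCast q n]
  ring

lemma ggrSummand_add (hq : q ≠ 0) (hq1 : ∀ i : ℕ, 1 ≤ i → q ^ i ≠ 1) {α β γ : K} (hα : α ≠ 0)
    (hβ : β ≠ 0) (hαβ : ∀ i : ℤ, α * β ≠ q ^ i) (hγ : ∀ i : ℤ, γ ≠ q ^ i) (i j k l m p : ℕ) :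
    ggrSummand q α β γ i j k l m (p + m) =
      qPow q 1 β (p + j) * qPow q 1 (α / γ) l *
        qShiftedFactorial q γ ((p : ℤ) - k + (m + i : ℕ)) /
        (qShiftedFactorial q (α * β) ((p : ℤ) - k + (m + i : ℕ)) * qPow q 1 q l *
          (β * q ^ p) ^ (m + i)) *
      ((-1) ^ k * q ^ (k + 1).choose 2 *
        qPow q 1 (γ * q ^ ((p : ℤ) - k + (m + i : ℕ))) k /
          (γ ^ k * qPow q 1 q k * qPow q 1 q j * qPow q 1 q p)) *
      ((-1) ^ m * q ^ (m + 1).choose 2 * (q ^ (m * (m + i)))⁻¹ * qPow q 1 (β * q ^ (p + j)) m *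
        qPow q 1 (α * β * q ^ ((p : ℤ) - k) * q ^ m) i / (qPow q 1 q m * qPow q 1 q i)) := by
  have splitβ : qPow q 1 β (p + m) * qPow q 1 (β * q ^ (p + m)) j =
      qPow q 1 β (p + j) * qPow q 1 (β * q ^ (p + j)) m := by
    rw [← qPow_add, ← qPow_add, add_right_comm]
  have splitγ : qPow q 1 γ (p + m) * qPow q 1 (γ * q ^ (p + m)) i =
      qShiftedFactorial q γ ((p : ℤ) - k + (m + i : ℕ)) *
        qPow q 1 (γ * q ^ ((p : ℤ) - k + (m + i : ℕ))) k := by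
    rw [← qPow_add, ← qShiftedFactorial_natCast, ← qShiftedFactorial_add_natCast hq hγ]
    congr 1
    push_cast
    ring
  have splitαβ : (qShiftedFactorial q (α * β) ((p + m : ℕ) - k))⁻¹ =
      qPow q 1 (α * β * q ^ ((p : ℤ) - k) * q ^ m) i /
        qShiftedFactorial q (α * β) ((p : ℤ) - k + (m + i : ℕ)) := by
    have shift : (p : ℤ) - k + (m + i : ℕ) = (p + m : ℕ) - k + i := by
      push_cast
      ring
    have base : α * β * q ^ ((p : ℤ) - k) * q ^ m = α * β * q ^ (((p + m : ℕ) : ℤ) - k) := by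
      rw [mul_assoc (α * β), ← zpow_natCast q m, ← zpow_add₀ hq, sub_add_eq_add_sub, Nat.cast_add]
    rw [shift, base, qShiftedFactorial_add_natCast hq hαβ, div_mul_cancel_right₀
      (qPow_mul_zpow_ne_zero hq hαβ _ i)]
  rw [ggrSummand_eq_qPow, splitβ, splitγ, qPow_inv_pow_div hq hq1,
    qPow_zpow_one_sub_div hq hαβ (mul_ne_zero hα hβ), ← div_div _ _ (qShiftedFactorial _ _ _),
    div_eq_mul_inv _ (qShiftedFactorial _ _ _), splitαβ]
  linear_combination qPow q 1 β (p + j) * qPow q 1 (β * q ^ (p + j)) m *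
    qShiftedFactorial q γ ((p : ℤ) - k + (m + i : ℕ)) *
    qPow q 1 (γ * q ^ ((p : ℤ) - k + (m + i : ℕ))) k * qPow q 1 (α / γ) l *
    ((-1) ^ k * q ^ (k + 1).choose 2) * ((-1) ^ m * q ^ (m + 1).choose 2) *
    qPow q 1 (α * β * q ^ ((p : ℤ) - k) * q ^ m) i /
    (qShiftedFactorial q (α * β) ((p : ℤ) - k + (m + i : ℕ)) * qPow q 1 q p * qPow q 1 q i *
      qPow q 1 q j * qPow q 1 q k * qPow q 1 q l * qPow q 1 q m) *
    ggrSummand_power hq hα hβ γ i k m p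

lemma sum_ggrSummand_add (hq : q ≠ 0) (hq1 : ∀ i : ℕ, 1 ≤ i → q ^ i ≠ 1) {α β γ : K} (hα : α ≠ 0)
    (hβ : β ≠ 0) (hγ0 : γ ≠ 0) (hαβ : ∀ i : ℤ, α * β ≠ q ^ i) (hγ : ∀ i : ℤ, γ ≠ q ^ i)
    (j k l p M : ℕ) :
    ∑ x ∈ antidiagonal M, ggrSummand q α β γ x.2 j k l x.1 (p + x.1) =
      qPow q 1 β (p + j) * qShiftedFactorial q γ ((p : ℤ) - k + M) * qPow q 1 (α / γ) l *
        qPow q 1 (α * (q ^ (k + j))⁻¹) M /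
        (qShiftedFactorial q (α * β) ((p : ℤ) - k + M) * qPow q 1 q l * qPow q 1 q M *
          γ ^ (k + j)) *
      ((-1) ^ k * q ^ (k + 1).choose 2 * qPow q 1 (γ * q ^ M * q ^ ((p : ℤ) - k)) k *
        (γ * q ^ M) ^ j / (qPow q 1 q k * qPow q 1 q j * qPow q 1 q p)) := by
  have baseγ : γ * q ^ ((p : ℤ) - k + M) = γ * q ^ M * q ^ ((p : ℤ) - k) := by
    rw [mul_assoc, ← zpow_natCast q M, ← zpow_add₀ hq, add_comm]
  have baseαβ : α * β * q ^ ((p : ℤ) - k) = β * q ^ (p + j) * (α * (q ^ (k + j))⁻¹) := by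
    rw [zpow_sub₀ hq, zpow_natCast, zpow_natCast, pow_add, pow_add]
    field_simp
  have scaleβ : qPow q (β * q ^ (p + j)) (α * β * q ^ ((p : ℤ) - k)) M / (β * q ^ p) ^ M =
      (q ^ M) ^ j * qPow q 1 (α * (q ^ (k + j))⁻¹) M := by
    have h := qPow_mul_mul q (β * q ^ (p + j)) 1 (α * (q ^ (k + j))⁻¹) M
    rw [mul_one, ← baseαβ] at h
    rw [h, div_eq_iff (pow_ne_zero M (mul_ne_zero hβ (pow_ne_zero p hq)))]
    ring
  have scaleγ : (γ * q ^ M) ^ j / γ ^ (k + j) = (q ^ M) ^ j / γ ^ k := by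
    rw [mul_pow, pow_add, mul_comm (γ ^ j), mul_div_mul_right _ _ (pow_ne_zero j hγ0)]
  have summand : ∀ x ∈ antidiagonal M, ggrSummand q α β γ x.2 j k l x.1 (p + x.1) = _ :=
    fun x hx => by
      rw [ggrSummand_add hq hq1 hα hβ hαβ hγ, mem_antidiagonal.1 hx]
  rw [sum_congr rfl summand, ← mul_sum, qChuVandermonde hq hq1, baseγ]
  set weight := qPow q 1 β (p + j) * qShiftedFactorial q γ ((p : ℤ) - k + M) *
    qPow q 1 (α / γ) l * ((-1) ^ k * q ^ (k + 1).choose 2 *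
      qPow q 1 (γ * q ^ M * q ^ ((p : ℤ) - k)) k) /
    (qShiftedFactorial q (α * β) ((p : ℤ) - k + M) * qPow q 1 q l * qPow q 1 q M *
      qPow q 1 q k * qPow q 1 q j * qPow q 1 q p)
  calc
    _ = weight / γ ^ k *
        (qPow q (β * q ^ (p + j)) (α * β * q ^ ((p : ℤ) - k)) M / (β * q ^ p) ^ M) := by ring
    _ = weight * qPow q 1 (α * (q ^ (k + j))⁻¹) M * ((γ * q ^ M) ^ j / γ ^ (k + j)) := by
      rw [scaleβ, scaleγ]
      ring
    _ = _ := by ring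

lemma sum_sum_ggrSummand (hq : q ≠ 0) (hq1 : ∀ i : ℕ, 1 ≤ i → q ^ i ≠ 1) {α β γ : K} (hα : α ≠ 0)
    (hβ : β ≠ 0) (hγ0 : γ ≠ 0) (hαβ : ∀ i : ℤ, α * β ≠ q ^ i) (hγ : ∀ i : ℤ, γ ≠ q ^ i)
    (l M R Y : ℕ) :
    ∑ x ∈ antidiagonal R with x.2 ≤ Y, ∑ y ∈ antidiagonal M,
        ggrSummand q α β γ y.2 x.2 x.1 l y.1 (Y - x.2 + y.1) =
      qPow q 1 β Y * qShiftedFactorial q γ ((Y : ℤ) - R + M) * qPow q 1 (α / γ) l *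
        qPow q 1 (α * (q ^ R)⁻¹) M /
        (qShiftedFactorial q (α * β) ((Y : ℤ) - R + M) * qPow q 1 q l * qPow q 1 q M * γ ^ R) *
      (qPow q (γ * q ^ M) q R / (qPow q 1 q R * qPow q 1 q Y)) := by
  rw [← qChuVandermonde_truncated hq hq1, mul_sum]
  refine sum_congr rfl fun ⟨k, j⟩ hx => ?_
  obtain ⟨hR, hjY⟩ := mem_filter.1 hx
  obtain rfl : k + j = R := mem_antidiagonal.1 hR
  obtain ⟨p, rfl⟩ : ∃ p, Y = p + j := Nat.exists_eq_add_of_le' hjY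
  have index : ((p + j : ℕ) : ℤ) - (k + j : ℕ) = p - k := by
    push_cast
    ring
  simp only [Nat.add_sub_cancel, index]
  exact sum_ggrSummand_add hq hq1 hα hβ hγ0 hαβ hγ j k l p M

lemma sum_sum_sum_ggrSummand (hq : q ≠ 0) (hq1 : ∀ i : ℕ, 1 ≤ i → q ^ i ≠ 1) {α β γ : K}
    (hα : α ≠ 0) (hβ : β ≠ 0) (hγ0 : γ ≠ 0) (hαβ : ∀ i : ℤ, α * β ≠ q ^ i)
    (hγ : ∀ i : ℤ, γ ≠ q ^ i) (X Y Z : ℕ) :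
    ∑ x ∈ antidiagonal X with x.1 ≤ Z, ∑ y ∈ antidiagonal (Z - x.1) with y.2 ≤ Y,
        ∑ z ∈ antidiagonal x.2, ggrSummand q α β γ z.2 y.2 y.1 x.1 z.1 (Y - y.2 + z.1) =
      qShiftedFactorial q α X * qShiftedFactorial q β Y * qShiftedFactorial q (q / γ) Z *
        qShiftedFactorial q γ ((X : ℤ) + Y - Z) /
        (qShiftedFactorial q q X * qShiftedFactorial q q Y * qShiftedFactorial q q Z *
          qShiftedFactorial q (α * β) ((X : ℤ) + Y - Z)) := by
  have scale (b : K) (n : ℕ) : qPow q 1 (b / γ) n = qPow q γ b n / γ ^ n := by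
    rw [eq_div_iff (pow_ne_zero n hγ0), mul_comm, ← qPow_mul_mul, mul_one, mul_div_cancel₀ _ hγ0]
  calc
    _ = qPow q 1 β Y * qShiftedFactorial q γ ((X : ℤ) + Y - Z) /
          (qShiftedFactorial q (α * β) ((X : ℤ) + Y - Z) * qPow q 1 q Y * γ ^ Z) *
          (qPow q 1 α X * qPow q γ q Z / (qPow q 1 q X * qPow q 1 q Z)) := by
      rw [← qSaalschutz_reflect hq hq1 α hγ, mul_sum]
      refine sum_congr rfl fun ⟨l, M⟩ hx => ?_
      obtain ⟨hX, hlZ⟩ := mem_filter.1 hx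
      obtain rfl : l + M = X := mem_antidiagonal.1 hX
      obtain ⟨R, rfl⟩ : ∃ R, Z = l + R := Nat.exists_eq_add_of_le hlZ
      have index : ((l + M : ℕ) : ℤ) + Y - (l + R : ℕ) = Y - R + M := by
        push_cast
        ring
      simp only [Nat.add_sub_cancel_left]
      rw [sum_sum_ggrSummand hq hq1 hα hβ hγ0 hαβ hγ, scale, index]
      ring
    _ = _ := by
      simp only [qShiftedFactorial_natCast, scale]
      ring

/-- The indices `(i, j, k, l, m, n)` of the sum for the coefficient of `x^X y^Y z^Z`. The condition
`j + n - m = Y` is written without subtraction; the ranges only serve to exhibit finiteness. -/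
def ggrIndices (X Y Z : ℕ) : Finset (ℕ × ℕ × ℕ × ℕ × ℕ × ℕ) :=
  {t ∈ range (X + 1) ×ˢ range (Z + 1) ×ˢ range (Z + 1) ×ˢ range (X + 1) ×ˢ range (X + 1) ×ˢ
      range (X + Y + 1) |
    t.1 + t.2.2.2.1 + t.2.2.2.2.1 = X ∧ t.2.1 + t.2.2.2.2.2 = Y + t.2.2.2.2.1 ∧
      t.2.1 + t.2.2.1 + t.2.2.2.1 = Z}

lemma mem_ggrIndices {X Y Z i j k l m n : ℕ} :
    (i, j, k, l, m, n) ∈ ggrIndices X Y Z ↔ i + l + m = X ∧ j + n = Y + m ∧ j + k + l = Z := by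
  simp only [ggrIndices, mem_filter, mem_product, mem_range]
  lia

lemma sum_ggrIndices {A : Type*} [AddCommMonoid A] (f : ℕ → ℕ → ℕ → ℕ → ℕ → ℕ → A)
    (hf : ∀ i j k l m n, n < m → f i j k l m n = 0) (X Y Z : ℕ) :
    ∑ t ∈ ggrIndices X Y Z, f t.1 t.2.1 t.2.2.1 t.2.2.2.1 t.2.2.2.2.1 t.2.2.2.2.2 =
      ∑ x ∈ antidiagonal X with x.1 ≤ Z, ∑ y ∈ antidiagonal (Z - x.1) with y.2 ≤ Y,
        ∑ z ∈ antidiagonal x.2, f z.2 y.2 y.1 x.1 z.1 (Y - y.2 + z.1) := by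
  rw [sum_sigma', sum_sigma']
  symm
  refine sum_of_injOn (fun s => (s.2.2, s.1.2.2, s.1.2.1, s.1.1.1, s.2.1, Y - s.1.2.2 + s.2.1))
    ?_ ?_ ?_ fun _ _ => rfl
  · rintro ⟨⟨⟨l, M⟩, k, j⟩, m, i⟩ hs ⟨⟨⟨l', M'⟩, k', j'⟩, m', i'⟩ hs' h
    simp only [mem_coe, mem_sigma, mem_filter, HasAntidiagonal.mem_antidiagonal] at hs hs'
    simp only [Prod.mk.injEq] at h
    obtain ⟨rfl, rfl, rfl, rfl, rfl, -⟩ := h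
    obtain rfl : M = M' := by lia
    rfl
  · rintro ⟨⟨⟨l, M⟩, k, j⟩, m, i⟩ hs
    simp only [mem_coe, mem_sigma, mem_filter, HasAntidiagonal.mem_antidiagonal] at hs
    rw [mem_coe, mem_ggrIndices]
    lia
  · rintro ⟨i, j, k, l, m, n⟩ ht hns
    rw [mem_ggrIndices] at ht
    refine hf i j k l m n ?_
    contrapose! hns
    refine ⟨⟨⟨(l, m + i), k, j⟩, m, i⟩, ?_, ?_⟩
    · simp only [mem_coe, mem_sigma, mem_filter, HasAntidiagonal.mem_antidiagonal]
      lia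
    · simp only [Prod.mk.injEq, true_and]
      lia

lemma tsum_ite_eq_sum_ggrIndices {A : Type*} [AddCommMonoid A] [TopologicalSpace A]
    (f : ℕ → ℕ → ℕ → ℕ → ℕ → ℕ → A) (X Y Z : ℕ) :
    (∑' t : ℕ × ℕ × ℕ × ℕ × ℕ × ℕ,
      (fun i j k l m n : ℕ =>
        if i + l + m = X ∧ j + n = Y + m ∧ j + k + l = Z then f i j k l m n else 0)
        t.1 t.2.1 t.2.2.1 t.2.2.2.1 t.2.2.2.2.1 t.2.2.2.2.2) =
      ∑ t ∈ ggrIndices X Y Z, f t.1 t.2.1 t.2.2.1 t.2.2.2.1 t.2.2.2.2.1 t.2.2.2.2.2 := by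
  rw [tsum_eq_sum (s := ggrIndices X Y Z)]
  · exact sum_congr rfl fun t ht => if_pos (mem_ggrIndices.1 ht)
  · exact fun t ht => if_neg (mt mem_ggrIndices.2 ht)

theorem ggr_q_analogue_coefficients_second_form_general (hq : q ≠ 0)
    (hq1 : ∀ i : ℕ, 1 ≤ i → q ^ i ≠ 1) {α β γ : K} (hα : α ≠ 0) (hβ : β ≠ 0) (hγ : γ ≠ 0)
    (hαβ : ∀ i : ℤ, α * β ≠ q ^ i) (hγq : ∀ i : ℤ, γ ≠ q ^ i) (X Y Z : ℕ) :
    qShiftedFactorial q α X * qShiftedFactorial q β Y * qShiftedFactorial q (q / γ) Z *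
        qShiftedFactorial q γ ((X : ℤ) + Y - Z) /
        (qShiftedFactorial q q X * qShiftedFactorial q q Y * qShiftedFactorial q q Z *
          qShiftedFactorial q (α * β) ((X : ℤ) + Y - Z)) =
      ∑ t ∈ ggrIndices X Y Z,
        ggrSummand q α β γ t.1 t.2.1 t.2.2.1 t.2.2.2.1 t.2.2.2.2.1 t.2.2.2.2.2 := by
  rw [sum_ggrIndices _ fun i j k l _ _ => ggrSummand_eq_zero_of_lt hq α β γ i j k l,
    sum_sum_sum_ggrSummand hq hq1 hα hβ hγ hαβ hγq]

end Field

theorem ggr_q_analogue_coefficients_second_form (q α β γ : ℂ)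
    (hq : q ≠ 0) (hq1 : ∀ i : ℕ, 1 ≤ i → q ^ i ≠ 1)
    (hα : α ≠ 0) (hβ : β ≠ 0) (hγ : γ ≠ 0)
    (hαβ : ∀ i : ℤ, α * β ≠ q ^ i) (hγq : ∀ i : ℤ, γ ≠ q ^ i)
    (X Y Z : ℕ) :
    qpoch q α (X : ℤ) * qpoch q β (Y : ℤ) * qpoch q (q / γ) (Z : ℤ) *
        qpoch q γ ((X : ℤ) + (Y : ℤ) - (Z : ℤ)) /
        (qpoch q q (X : ℤ) * qpoch q q (Y : ℤ) * qpoch q q (Z : ℤ) *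
          qpoch q (α * β) ((X : ℤ) + (Y : ℤ) - (Z : ℤ))) =
    (∑' t : ℕ × ℕ × ℕ × ℕ × ℕ × ℕ,
      (fun (i j k l m n : ℕ) =>
        if i + l + m = X ∧ j + n = Y + m ∧ j + k + l = Z then
          q ^ ((k : ℤ) * n - (i : ℤ) * n + (m : ℤ)) *
            α ^ (k : ℤ) * β ^ ((k : ℤ) - (i : ℤ) - (m : ℤ)) * γ ^ (-(k : ℤ)) *
            (qpoch q β (n : ℤ) * qpoch q γ (n : ℤ) * qpoch q (γ * q ^ (n : ℤ)) (i : ℤ) *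
              qpoch q (β * q ^ (n : ℤ)) (j : ℤ) *
              qpoch q (q ^ (1 - (n : ℤ)) / (α * β)) (k : ℤ) *
              qpoch q (α / γ) (l : ℤ) *
              qpoch q (q ^ (-(n : ℤ))) (m : ℤ)) /
            (qpoch q (α * β) (n : ℤ) * qpoch q q (n : ℤ) * qpoch q q (i : ℤ) *
              qpoch q q (j : ℤ) * qpoch q q (k : ℤ) * qpoch q q (l : ℤ) *
              qpoch q q (m : ℤ))
        else 0) t.1 t.2.1 t.2.2.1 t.2.2.2.1 t.2.2.2.2.1 t.2.2.2.2.2) := by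
  refine (ggr_q_analogue_coefficients_second_form_general hq hq1 hα hβ hγ hαβ hγq X Y Z).trans ?_
  exact (tsum_ite_eq_sum_ggrIndices (ggrSummand q α β γ) X Y Z).symm
end

section
/- Let q ∈ ℂ with 0 < |q| < 1, and let α, β, γ, x, y, z ∈ ℂ with β ≠ 0, γ ≠ 0, x ≠ 0, max(|x|, |y|, |αβ/γ|) < min(1, 1/|z|), with αβ ≠ q^n and γ ≠ q^n for all integers n ≥ 1, and such that none of x, y, x/β, β/x, xz, yz, αβz/γ, αβ, βyz, qβ/x, αx, xyz, qx/β equals q^{−n} for any integer n ≥ 0. Then ∑_{j,k,m ≥ 0} (α;q)_j (β;q)_k (q/γ;q)_m (γ;q)_{j+k−m} / ((q;q)_j (q;q)_k (q;q)_m (αβ;q)_{j+k−m}) · x^j y^k z^m converges absolutely and equals [(γx/β;q)_∞ (qz/γ;q)_∞ (αxz/γ;q)_∞ (βyz;q)_∞ / ((x/β;q)_∞ (αβz/γ;q)_∞ (xz;q)_∞ (yz;q)_∞)] · ₄φ₃[β, γ, αβz/γ, βy/x; αβ, βyz, qβ/x; q, q] + [(qz/γ;q)_∞ (β;q)_∞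 (γ;q)_∞ (βy/x;q)_∞ (αx;q)_∞ (xyz;q)_∞ / ((x;q)_∞ (y;q)_∞ (xz;q)_∞ (yz;q)_∞ (αβ;q)_∞ (β/x;q)_∞)] · ₄φ₃[x, y, γx/β, αxz/γ; αx, xyz, qx/β; q, q]. -/
open Finset

/-- The infinite `q`-shifted factorial `(a;q)_∞`. -/
noncomputable def qinf (q a : ℂ) : ℂ := ∏' i : ℕ, (1 - a * q ^ i)

/-- The balanced basic hypergeometric series `₄φ₃[a₁,a₂,a₃,a₄; b₁,b₂,b₃; q, u]`. -/
noncomputable def Phi43 (q a1 a2 a3 a4 b1 b2 b3 u : ℂ) : ℂ :=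
  ∑' ℓ : ℕ,
    (qpoch q a1 (ℓ : ℤ) * qpoch q a2 (ℓ : ℤ) * qpoch q a3 (ℓ : ℤ) * qpoch q a4 (ℓ : ℤ)) /
      (qpoch q q (ℓ : ℤ) * qpoch q b1 (ℓ : ℤ) * qpoch q b2 (ℓ : ℤ) * qpoch q b3 (ℓ : ℤ)) *
      u ^ ℓ
/-- General term of the `q`-analogue of the Gelfand–Graev–Retakh triple series. -/
noncomputable def qGGRTerm (q α β γ x y z : ℂ) : ℕ × ℕ × ℕ → ℂ := fun p =>
  qpoch q α (p.1 : ℤ) * qpoch q β (p.2.1 : ℤ) * qpoch q (q / γ) (p.2.2 : ℤ) *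
      qpoch q γ ((p.1 : ℤ) + (p.2.1 : ℤ) - (p.2.2 : ℤ)) /
    (qpoch q q (p.1 : ℤ) * qpoch q q (p.2.1 : ℤ) * qpoch q q (p.2.2 : ℤ) *
      qpoch q (α * β) ((p.1 : ℤ) + (p.2.1 : ℤ) - (p.2.2 : ℤ))) *
    x ^ p.1 * y ^ p.2.1 * z ^ p.2.2

open Filter Topology

/-!
With `j + k = n` fixed, the sum over `m` is a function of `z` determined by a `q`-difference
equation, and it has a closed form. This leaves a single series (`kernelSum`) in `x`, `y`, `z` and
`b = β / x`. For small `x` and `y`, part of each of its terms is an iterated `q`-derivative in `b`,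
and expanding it produces a double series symmetric in `z` and `b`. After the exchange of `z` and
`b` each term is a combination of two `₂φ₁` by the nonterminating `q`-Vandermonde sum, and
interchanging the order of summation gives the two `₄φ₃` through the `q`-binomial theorem. The
restriction on `x` and `y` is removed by analytic continuation in `s` along `(s x, s y)`.
-/

section QFactorial

variable {R : Type*} [CommRing R]

/-- The `q`-shifted factorial `(a;q)_n` with a natural index, over any commutative ring. -/
def qpochNat (q a : R) (n : ℕ) : R := ∏ i ∈ range n, (1 - a * q ^ i)

/-- The genericity condition `a ∉ {1, q⁻¹, q⁻², …}`, under which no factor of `(a;q)_n` or of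
`(a;q)_∞` vanishes. -/
def QRegular (q a : R) : Prop := ∀ n : ℕ, a * q ^ n ≠ 1

@[simp]
lemma qpochNat_zero (q a : R) : qpochNat q a 0 = 1 := by simp [qpochNat]

lemma qpochNat_succ (q a : R) (n : ℕ) :
    qpochNat q a (n + 1) = qpochNat q a n * (1 - a * q ^ n) :=
  prod_range_succ _ n

lemma qpochNat_succ_left (q a : R) (n : ℕ) :
    qpochNat q a (n + 1) = (1 - a) * qpochNat q (a * q) n := by
  simp only [qpochNat, prod_range_succ', pow_zero, mul_one, pow_succ', ← mul_assoc]
  exact mul_comm _ _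

lemma QRegular.mul_pow {q a : R} (h : QRegular q a) (m : ℕ) : QRegular q (a * q ^ m) := fun n => by
  rw [mul_assoc, ← pow_add]
  exact h (m + n)

lemma QRegular.mul_base {q a : R} (h : QRegular q a) : QRegular q (a * q) := by
  simpa only [pow_one] using h.mul_pow 1

lemma QRegular.one_sub_ne_zero {q a : R} (h : QRegular q a) (n : ℕ) : 1 - a * q ^ n ≠ 0 :=
  sub_ne_zero.mpr (h n).symm

lemma QRegular.qpochNat_ne_zero [IsDomain R] {q a : R} (h : QRegular q a) (n : ℕ) :
    qpochNat q a n ≠ 0 :=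
  prod_ne_zero_iff.mpr fun i _ => h.one_sub_ne_zero i

lemma QRegular.one_sub_pow_succ_ne_zero {q : R} (h : QRegular q q) (n : ℕ) :
    1 - q ^ (n + 1) ≠ 0 := by
  simpa only [pow_succ'] using h.one_sub_ne_zero n

lemma norm_mul_pow_lt_one {𝕜 : Type*} [NormedField 𝕜] {q a : 𝕜} (hq : ‖q‖ ≤ 1)
    (ha : ‖a‖ < 1) (n : ℕ) : ‖a * q ^ n‖ < 1 := by
  rw [norm_mul, norm_pow]
  exact mul_lt_one_of_nonneg_of_lt_one_left (norm_nonneg a) ha (pow_le_one₀ (norm_nonneg q) hq)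

lemma qRegular_of_norm_lt_one {𝕜 : Type*} [NormedField 𝕜] {q a : 𝕜} (hq : ‖q‖ ≤ 1)
    (ha : ‖a‖ < 1) : QRegular q a := fun n h => by
  simpa only [h, norm_one, lt_irrefl] using norm_mul_pow_lt_one hq ha n

lemma qRegular_self {𝕜 : Type*} [NormedField 𝕜] {q : 𝕜} (hq : ‖q‖ < 1) : QRegular q q :=
  qRegular_of_norm_lt_one hq.le hq

lemma norm_qpochNat_le {𝕜 : Type*} [NormedField 𝕜] {q a : 𝕜} (hq : ‖q‖ < 1) {r : ℝ}
    (ha : ‖a‖ ≤ r) (n : ℕ) : ‖qpochNat q a n‖ ≤ Real.exp (r / (1 - ‖q‖)) := by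
  have hr : 0 ≤ r := (norm_nonneg a).trans ha
  calc ‖qpochNat q a n‖ ≤ ∏ i ∈ range n, (1 + r * ‖q‖ ^ i) := by
        rw [qpochNat, norm_prod]
        refine prod_le_prod (fun _ _ => norm_nonneg _) fun i _ => ?_
        calc ‖1 - a * q ^ i‖ ≤ ‖(1 : 𝕜)‖ + ‖a * q ^ i‖ := norm_sub_le _ _
          _ ≤ 1 + r * ‖q‖ ^ i := by rw [norm_one, norm_mul, norm_pow]; gcongr
    _ ≤ Real.exp (∑ i ∈ range n, r * ‖q‖ ^ i) :=
        Real.prod_one_add_le_exp_sum _ fun _ => by positivity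
    _ ≤ Real.exp (r / (1 - ‖q‖)) := by
        rw [← mul_sum, div_eq_mul_inv, ← tsum_geometric_of_lt_one (norm_nonneg q) hq]
        gcongr
        exact (summable_geometric_of_lt_one (norm_nonneg q) hq).sum_le_tsum _
          fun _ _ => by positivity

end QFactorial

section InfiniteProduct

variable {q a : ℂ}

lemma summable_norm_neg_mul_pow (hq : ‖q‖ < 1) (a : ℂ) :
    Summable fun i : ℕ => ‖-(a * q ^ i)‖ := by
  simpa only [norm_neg, norm_mul, norm_pow] using
    (summable_geometric_of_lt_one (norm_nonneg q) hq).mul_left ‖a‖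

lemma tendsto_qpochNat (hq : ‖q‖ < 1) (a : ℂ) :
    Tendsto (qpochNat q a) atTop (𝓝 (qinf q a)) := by
  have hmul := multipliable_one_add_of_summable (summable_norm_neg_mul_pow hq a)
  simp only [← sub_eq_add_neg] at hmul
  exact hmul.tendsto_prod_tprod_nat

lemma QRegular.qinf_ne_zero (h : QRegular q a) (hq : ‖q‖ < 1) : qinf q a ≠ 0 := by
  have hfac : ∀ i : ℕ, 1 + -(a * q ^ i) ≠ 0 := fun i => by
    simpa only [sub_eq_add_neg] using h.one_sub_ne_zero i
  simpa only [qinf, sub_eq_add_neg] using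
    tprod_one_add_ne_zero_of_summable hfac (summable_norm_neg_mul_pow hq a)

lemma qinf_ne_zero_of_norm_lt_one (hq : ‖q‖ < 1) (ha : ‖a‖ < 1) : qinf q a ≠ 0 :=
  (qRegular_of_norm_lt_one hq.le ha).qinf_ne_zero hq

lemma qinf_eq_one_sub_mul (hq : ‖q‖ < 1) (a : ℂ) : qinf q a = (1 - a) * qinf q (a * q) := by
  refine tendsto_nhds_unique ((tendsto_qpochNat hq a).comp (tendsto_add_atTop_nat 1))
    (((tendsto_qpochNat hq (a * q)).const_mul (1 - a)).congr fun n => ?_)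
  exact (qpochNat_succ_left q a n).symm

lemma qinf_eq_qpochNat_mul (hq : ‖q‖ < 1) (a : ℂ) (n : ℕ) :
    qinf q a = qpochNat q a n * qinf q (a * q ^ n) := by
  induction n with
  | zero => simp
  | succ n ih =>
    rw [ih, qinf_eq_one_sub_mul hq (a * q ^ n), qpochNat_succ, pow_succ, mul_assoc, mul_assoc]

@[simp]
lemma qinf_zero (q : ℂ) : qinf q 0 = 1 := by simp [qinf]

lemma qinf_one (hq : ‖q‖ < 1) : qinf q 1 = 0 := by
  rw [qinf_eq_one_sub_mul hq, sub_self, zero_mul]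

lemma norm_qinf_le (hq : ‖q‖ < 1) {r : ℝ} (ha : ‖a‖ ≤ r) :
    ‖qinf q a‖ ≤ Real.exp (r / (1 - ‖q‖)) :=
  le_of_tendsto (tendsto_qpochNat hq a).norm (Eventually.of_forall (norm_qpochNat_le hq ha))

lemma QRegular.exists_norm_inv_qpochNat_le (h : QRegular q a) (hq : ‖q‖ < 1) :
    ∃ C, 0 < C ∧ ∀ n, ‖(qpochNat q a n)⁻¹‖ ≤ C := by
  have hlim := (tendsto_qpochNat hq a).inv₀ (h.qinf_ne_zero hq)
  obtain ⟨C, hC, hbound⟩ := (Metric.isBounded_range_of_tendsto _ hlim).exists_pos_norm_le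
  exact ⟨C, hC, fun n => hbound _ ⟨n, rfl⟩⟩

lemma differentiable_qpochNat (q : ℂ) (n : ℕ) : Differentiable ℂ fun a => qpochNat q a n := by
  unfold qpochNat
  fun_prop

lemma differentiable_qinf (hq : ‖q‖ < 1) : Differentiable ℂ (qinf q) := fun a => by
  have hsum : Summable fun i : ℕ => (‖a‖ + 1) * ‖q‖ ^ i :=
    (summable_geometric_of_lt_one (norm_nonneg q) hq).mul_left _
  have hprod := hsum.hasProdLocallyUniformlyOn_nat_one_add (K := Metric.ball (0 : ℂ) (‖a‖ + 1))
    (f := fun (i : ℕ) (w : ℂ) => -(w * q ^ i)) Metric.isOpen_ball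
    (Eventually.of_forall fun i w hw => by
      rw [norm_neg, norm_mul, norm_pow]
      gcongr
      exact (mem_ball_zero_iff.mp hw).le)
    fun i => by fun_prop
  have hdiff : DifferentiableOn ℂ (qinf q) (Metric.ball 0 (‖a‖ + 1)) := by
    refine (TendstoLocallyUniformlyOn.differentiableOn hprod
      (Eventually.of_forall fun s => by fun_prop) Metric.isOpen_ball).congr fun w _ => ?_
    simp only [qinf, sub_eq_add_neg]
  exact hdiff.differentiableAt (Metric.isOpen_ball.mem_nhds (by simp))

end InfiniteProduct

/-! ### The power series `(aw;q)_∞ / (xw;q)_∞` -/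

section FormalSeries

open PowerSeries

variable {K : Type*} [Field K] {q : K}

/-- The coefficient of `w ^ n` in `(aw;q)_∞ / (xw;q)_∞`, as given by the `q`-binomial theorem. The
product in the numerator is `x ^ n (a/x;q)_n`, written so that `x = 0` is allowed. -/
noncomputable def qRatioCoeff (q a x : K) (n : ℕ) : K :=
  (∏ i ∈ range n, (x - a * q ^ i)) / qpochNat q q n

/-- The formal power series `(aw;q)_∞ / (xw;q)_∞` in `w`. -/
noncomputable def qRatio (q a x : K) : K⟦X⟧ := PowerSeries.mk (qRatioCoeff q a x)

/-- The formal power series `(aw;q)_∞ (bw;q)_∞ / ((xw;q)_∞ (yw;q)_∞)` in `w`. -/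
noncomputable def qRatioProd (q a b x y : K) : K⟦X⟧ := qRatio q a x * qRatio q b y

/-- The coefficient of `w ^ n` in `(aw;q)_∞ (bw;q)_∞ / ((xw;q)_∞ (yw;q)_∞)`. -/
noncomputable def qRatioProdCoeff (q a b x y : K) (n : ℕ) : K := coeff n (qRatioProd q a b x y)

@[simp]
lemma qRatioCoeff_zero (q a x : K) : qRatioCoeff q a x 0 = 1 := by simp [qRatioCoeff]

lemma qRatioCoeff_succ_eq (q a x : K) (n : ℕ) :
    qRatioCoeff q a x (n + 1) = (x - a * q ^ n) / (1 - q ^ (n + 1)) * qRatioCoeff q a x n := by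
  rw [qRatioCoeff, qRatioCoeff, prod_range_succ, qpochNat_succ, ← pow_succ', div_mul_div_comm,
    mul_comm (x - a * q ^ n), mul_comm (1 - q ^ (n + 1))]

lemma qRatioCoeff_succ (hq : QRegular q q) (a x : K) (n : ℕ) :
    (1 - q ^ (n + 1)) * qRatioCoeff q a x (n + 1) = (x - a * q ^ n) * qRatioCoeff q a x n := by
  rw [qRatioCoeff_succ_eq, ← mul_assoc, mul_div_cancel₀ _ (hq.one_sub_pow_succ_ne_zero n)]

lemma qRatioCoeff_succ_left (q a x : K) (n : ℕ) :
    qRatioCoeff q a x (n + 1) = (x - a) / (1 - q ^ (n + 1)) * qRatioCoeff q (a * q) x n := by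
  rw [qRatioCoeff, qRatioCoeff, prod_range_succ', qpochNat_succ, ← pow_succ', div_mul_div_comm,
    pow_zero, mul_one, mul_comm (x - a), mul_comm (1 - q ^ (n + 1))]
  simp only [pow_succ', mul_assoc]

lemma qRatioCoeff_mul_mul (q a x t : K) (n : ℕ) :
    qRatioCoeff q (t * a) (t * x) n = t ^ n * qRatioCoeff q a x n := by
  simp only [qRatioCoeff, mul_assoc, ← mul_sub, prod_mul_distrib, prod_const, card_range,
    mul_div_assoc]

lemma qRatioCoeff_zero_left (q x : K) (n : ℕ) : qRatioCoeff q 0 x n = x ^ n / qpochNat q q n := by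
  simp [qRatioCoeff]

lemma qRatioCoeff_one_right (q a : K) (n : ℕ) :
    qRatioCoeff q a 1 n = qpochNat q a n / qpochNat q q n := rfl

lemma qRatioCoeff_mul_left (q a x : K) (n : ℕ) :
    qRatioCoeff q (a * x) x n = qpochNat q a n / qpochNat q q n * x ^ n := by
  have h := qRatioCoeff_mul_mul q a 1 x n
  rwa [mul_one, mul_comm x, mul_comm (x ^ n), qRatioCoeff_one_right] at h

lemma coeff_zero_one_sub_C_mul_X_mul (x : K) (F : K⟦X⟧) :
    coeff 0 ((1 - C x * X) * F) = coeff 0 F := by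
  rw [sub_mul, one_mul, map_sub, mul_assoc, coeff_C_mul, coeff_zero_X_mul, mul_zero, sub_zero]

lemma coeff_succ_one_sub_C_mul_X_mul (x : K) (F : K⟦X⟧) (n : ℕ) :
    coeff (n + 1) ((1 - C x * X) * F) = coeff (n + 1) F - x * coeff n F := by
  rw [sub_mul, one_mul, map_sub, mul_assoc, coeff_C_mul, coeff_succ_X_mul]

lemma one_sub_C_mul_X_ne_zero (x : K) : (1 - C x * X : K⟦X⟧) ≠ 0 := fun h => by
  simpa using congrArg (coeff 0) h

lemma qRatio_qDifference (hq : QRegular q q) (a x : K) :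
    (1 - C x * X) * qRatio q a x = (1 - C a * X) * rescale q (qRatio q a x) := by
  ext n
  cases n with
  | zero => simp [coeff_zero_one_sub_C_mul_X_mul]
  | succ n =>
    simp only [coeff_succ_one_sub_C_mul_X_mul, coeff_rescale, qRatio, coeff_mk]
    linear_combination qRatioCoeff_succ hq a x n

lemma one_sub_mul_qRatio (hq : QRegular q q) (a x : K) :
    (1 - C a * X) * qRatio q (a * q) x = qRatio q a x := by
  ext n
  cases n with
  | zero => simp [coeff_zero_one_sub_C_mul_X_mul, qRatio]
  | succ n =>
    have hn := hq.one_sub_pow_succ_ne_zero n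
    simp only [coeff_succ_one_sub_C_mul_X_mul, qRatio, coeff_mk, qRatioCoeff_succ_eq q (a * q),
      qRatioCoeff_succ_left q a]
    field_simp
    ring

lemma rescale_qRatio (q a x t : K) : rescale t (qRatio q a x) = qRatio q (t * a) (t * x) := by
  ext n
  simp only [coeff_rescale, qRatio, coeff_mk, qRatioCoeff_mul_mul]

lemma eq_zero_of_qDifference (hq : QRegular q q) {a x : K} {F : K⟦X⟧} (h₀ : coeff 0 F = 0)
    (h : (1 - C x * X) * F = (1 - C a * X) * rescale q F) : F = 0 := by
  ext n
  rw [map_zero]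
  induction n with
  | zero => exact h₀
  | succ n ih =>
    have hn := congrArg (coeff (n + 1)) h
    rw [coeff_succ_one_sub_C_mul_X_mul, coeff_succ_one_sub_C_mul_X_mul, coeff_rescale,
      coeff_rescale, ih] at hn
    refine (mul_eq_zero.mp ?_).resolve_left (hq.one_sub_pow_succ_ne_zero n)
    linear_combination hn

lemma qRatio_eq_mul (hq : QRegular q q) (a x : K) :
    qRatio q a x = qRatio q a 0 * qRatio q 0 x := by
  rw [← sub_eq_zero]
  refine eq_zero_of_qDifference hq (a := a) (x := x) (by simp [qRatio]) ?_
  have hx := qRatio_qDifference hq a x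
  have hnum := qRatio_qDifference hq a 0
  have hden := qRatio_qDifference hq 0 x
  simp only [map_zero, zero_mul, sub_zero, one_mul] at hnum hden
  rw [map_sub, map_mul]
  linear_combination hx - qRatio q a 0 * hden - rescale q (qRatio q 0 x) * hnum

lemma qRatioProd_swap_num (hq : QRegular q q) (a b x y : K) :
    qRatioProd q a b x y = qRatioProd q b a x y := by
  unfold qRatioProd
  rw [qRatio_eq_mul hq a x, qRatio_eq_mul hq b y, qRatio_eq_mul hq a y, qRatio_eq_mul hq b x]
  ring

lemma qRatioProd_qDifference (hq : QRegular q q) (a b x y : K) :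
    (1 - C x * X) * (1 - C y * X) * qRatioProd q a b x y =
      (1 - C a * X) * (1 - C b * X) * rescale q (qRatioProd q a b x y) := by
  unfold qRatioProd
  rw [map_mul]
  linear_combination (1 - C y * X) * qRatio q b y * qRatio_qDifference hq a x +
    (1 - C a * X) * rescale q (qRatio q a x) * qRatio_qDifference hq b y

lemma qRatioProdCoeff_eq_sum (q a b x y : K) (n : ℕ) :
    qRatioProdCoeff q a b x y n =
      ∑ p ∈ antidiagonal n, qRatioCoeff q a x p.1 * qRatioCoeff q b y p.2 := by
  simp only [qRatioProdCoeff, qRatioProd, coeff_mul, qRatio, coeff_mk]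

@[simp]
lemma qRatioProdCoeff_zero (q a b x y : K) : qRatioProdCoeff q a b x y 0 = 1 := by
  simp [qRatioProdCoeff_eq_sum]

lemma qRatioProdCoeff_swap_num (hq : QRegular q q) (a b x y : K) (n : ℕ) :
    qRatioProdCoeff q a b x y n = qRatioProdCoeff q b a x y n := by
  rw [qRatioProdCoeff, qRatioProd_swap_num hq, qRatioProdCoeff]

lemma qRatioProdCoeff_succ_balanced (hq : QRegular q q) (a b x y : K) (n : ℕ) :
    b * (1 - q ^ (n + 1)) * qRatioProdCoeff q a (x * y * b) x y (n + 1) =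
      (1 - a * b * q ^ n) * qRatioProdCoeff q a (x * y * b) x y n -
        (1 - x * b) * (1 - y * b) * qRatioProdCoeff q a (x * y * (b * q)) x y n := by
  have hdiff := qRatioProd_qDifference hq a (x * y * b) x y
  have hshift : (1 - C (x * y * b) * X) * qRatioProd q a (x * y * (b * q)) x y =
      qRatioProd q a (x * y * b) x y := by
    rw [qRatioProd, qRatioProd, ← one_sub_mul_qRatio hq (x * y * b) y, mul_left_comm, mul_assoc _ b]
  set G := qRatioProd q a (x * y * b) x y
  have hseries : C b * (G - rescale q G) = X * (G - C (a * b) * rescale q G) -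
      X * (C ((1 - x * b) * (1 - y * b)) * qRatioProd q a (x * y * (b * q)) x y) := by
    apply mul_left_cancel₀
      (mul_ne_zero (one_sub_C_mul_X_ne_zero a) (one_sub_C_mul_X_ne_zero (x * y * b)))
    simp only [map_mul, map_sub, map_one] at hdiff hshift ⊢
    linear_combination (C b - X * C a * C b) * hdiff +
      X * ((1 - C x * C b) * (1 - C y * C b)) * (1 - C a * X) * hshift
  have hcoeff := congrArg (coeff (n + 1)) hseries
  rw [coeff_C_mul, map_sub, map_sub, coeff_succ_X_mul, coeff_succ_X_mul, coeff_rescale, map_sub,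
    coeff_C_mul, coeff_C_mul, coeff_rescale] at hcoeff
  simp only [qRatioProdCoeff]
  linear_combination hcoeff

lemma qRatioProdCoeff_succ_dilate (hq : QRegular q q) (a d z : K) (n : ℕ) :
    (1 - q ^ (n + 1)) * qRatioProdCoeff q a (d * z) 1 z (n + 1) =
      (z - a * q ^ n) * qRatioProdCoeff q a (d * z) 1 z n +
        (1 - d * z) * qRatioProdCoeff q a (d * (q * z)) 1 (q * z) n := by
  have hdiff := qRatioProd_qDifference hq a (d * z) 1 z
  have hdilate : (1 - C (d * z) * X) * qRatioProd q a (d * (q * z)) 1 (q * z) =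
      (1 - C z * X) * qRatioProd q a (d * z) 1 z := by
    have hz := qRatio_qDifference hq (d * z) z
    rw [rescale_qRatio, mul_left_comm q] at hz
    unfold qRatioProd
    linear_combination -qRatio q a 1 * hz
  set G := qRatioProd q a (d * z) 1 z
  have hseries : G - rescale q G = X * (C z * G - C a * rescale q G +
      C (1 - d * z) * qRatioProd q a (d * (q * z)) 1 (q * z)) := by
    apply mul_left_cancel₀
      (mul_ne_zero (one_sub_C_mul_X_ne_zero a) (one_sub_C_mul_X_ne_zero (d * z)))
    simp only [map_mul, map_sub, map_one] at hdiff hdilate ⊢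
    linear_combination (1 - X * C a) * hdiff - X * (1 - C d * C z) * (1 - C a * X) * hdilate
  have hcoeff := congrArg (coeff (n + 1)) hseries
  rw [map_sub, coeff_succ_X_mul, coeff_rescale, map_add, map_sub, coeff_C_mul, coeff_C_mul,
    coeff_C_mul, coeff_rescale] at hcoeff
  simp only [qRatioProdCoeff]
  linear_combination hcoeff

end FormalSeries

/-! ### The `q`-binomial theorem -/

section GeometricBounds

variable {𝕜 : Type*} [NormedField 𝕜] {q a b x y w : 𝕜}

lemma summable_norm_qRatioCoeff_mul_pow (hq : ‖q‖ < 1) (a : 𝕜) (h : ‖x * w‖ < 1) :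
    Summable fun n => ‖qRatioCoeff q a x n * w ^ n‖ := by
  have hpow := tendsto_pow_atTop_nhds_zero_of_norm_lt_one hq
  have hlim : Tendsto (fun n => ‖(x - a * q ^ n) / (1 - q ^ (n + 1)) * w‖) atTop
      (𝓝 ‖(x - a * 0) / (1 - 0) * w‖) :=
    ((((hpow.const_mul a).const_sub x).div
      ((hpow.comp (tendsto_add_atTop_nat 1)).const_sub 1) (by simp)).mul_const w).norm
  obtain ⟨s, hs, hs1⟩ := exists_between h
  refine summable_of_ratio_norm_eventually_le hs1 ?_
  filter_upwards [hlim.eventually_lt_const (u := s) (by simpa using hs)] with n hn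
  calc ‖‖qRatioCoeff q a x (n + 1) * w ^ (n + 1)‖‖
      = ‖(x - a * q ^ n) / (1 - q ^ (n + 1)) * w‖ * ‖qRatioCoeff q a x n * w ^ n‖ := by
        rw [norm_norm, ← norm_mul, qRatioCoeff_succ_eq, pow_succ' w, ← mul_mul_mul_comm]
    _ ≤ s * ‖‖qRatioCoeff q a x n * w ^ n‖‖ := by rw [norm_norm]; gcongr

lemma qRatioProdCoeff_mul_pow (q a b x y w : 𝕜) (n : ℕ) :
    qRatioProdCoeff q a b x y n * w ^ n =
      ∑ p ∈ antidiagonal n,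
        qRatioCoeff q a x p.1 * w ^ p.1 * (qRatioCoeff q b y p.2 * w ^ p.2) := by
  rw [qRatioProdCoeff_eq_sum, sum_mul]
  refine sum_congr rfl fun p hp => ?_
  rw [← mem_antidiagonal.mp hp, pow_add, mul_mul_mul_comm]

lemma summable_norm_qRatioProdCoeff_mul_pow (hq : ‖q‖ < 1) (a b : 𝕜) (hx : ‖x * w‖ < 1)
    (hy : ‖y * w‖ < 1) : Summable fun n => ‖qRatioProdCoeff q a b x y n * w ^ n‖ := by
  simpa only [qRatioProdCoeff_mul_pow] using summable_norm_sum_mul_antidiagonal_of_summable_norm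
    (summable_norm_qRatioCoeff_mul_pow hq a hx) (summable_norm_qRatioCoeff_mul_pow hq b hy)

lemma norm_qRatioCoeff_le (hq : ‖q‖ < 1) {A X : ℝ} (ha : ‖a‖ ≤ A) (hx : ‖x‖ ≤ X) (n : ℕ) :
    ‖qRatioCoeff q a x n‖ ≤ qRatioCoeff ‖q‖ (-A) X n := by
  induction n with
  | zero => simp
  | succ n ih =>
    have hpow : ‖q‖ ^ (n + 1) < 1 := pow_lt_one₀ (norm_nonneg q) hq n.succ_ne_zero
    have hnum : ‖x - a * q ^ n‖ ≤ X - -A * ‖q‖ ^ n :=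
      calc ‖x - a * q ^ n‖ ≤ ‖x‖ + ‖a * q ^ n‖ := norm_sub_le _ _
        _ ≤ X + A * ‖q‖ ^ n := by rw [norm_mul, norm_pow]; gcongr
        _ = X - -A * ‖q‖ ^ n := by ring
    have hden : 1 - ‖q‖ ^ (n + 1) ≤ ‖1 - q ^ (n + 1)‖ := by
      simpa only [norm_one, norm_pow] using norm_sub_norm_le 1 (q ^ (n + 1))
    rw [qRatioCoeff_succ_eq, qRatioCoeff_succ_eq, norm_mul, norm_div]
    gcongr
    · exact div_nonneg ((norm_nonneg _).trans hnum) (sub_nonneg.mpr hpow.le)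
    · exact (norm_nonneg _).trans hnum

lemma norm_qRatioProdCoeff_le (hq : ‖q‖ < 1) {A B X Y : ℝ} (ha : ‖a‖ ≤ A) (hb : ‖b‖ ≤ B)
    (hx : ‖x‖ ≤ X) (hy : ‖y‖ ≤ Y) (n : ℕ) :
    ‖qRatioProdCoeff q a b x y n‖ ≤ qRatioProdCoeff ‖q‖ (-A) (-B) X Y n := by
  rw [qRatioProdCoeff_eq_sum, qRatioProdCoeff_eq_sum]
  refine (norm_sum_le _ _).trans (sum_le_sum fun p _ => ?_)
  rw [norm_mul]
  exact mul_le_mul (norm_qRatioCoeff_le hq ha hx _) (norm_qRatioCoeff_le hq hb hy _)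
    (norm_nonneg _) ((norm_nonneg _).trans (norm_qRatioCoeff_le hq ha hx _))

lemma exists_norm_le_mul_pow_of_summable {f : ℕ → 𝕜} {r : 𝕜} (hr : r ≠ 0)
    (h : Summable fun n => ‖f n * r⁻¹ ^ n‖) : ∃ C, 0 < C ∧ ∀ n, ‖f n‖ ≤ C * ‖r‖ ^ n := by
  obtain ⟨C, hC, hle⟩ :=
    (Metric.isBounded_range_of_tendsto _ h.tendsto_atTop_zero).exists_pos_norm_le
  refine ⟨C, hC, fun n => ?_⟩
  have hn := hle _ ⟨n, rfl⟩
  rwa [norm_norm, norm_mul, norm_pow, norm_inv, inv_pow, ← div_eq_mul_inv,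
    div_le_iff₀ (pow_pos (norm_pos_iff.mpr hr) n)] at hn

lemma exists_norm_qRatioProdCoeff_le_mul_pow (hq : ‖q‖ < 1) (A B : ℝ) {X r : ℝ} (hX : 0 ≤ X)
    (hr : X < r) : ∃ C, 0 < C ∧ ∀ a b x y : 𝕜, ‖a‖ ≤ A → ‖b‖ ≤ B → ‖x‖ ≤ X → ‖y‖ ≤ X →
      ∀ n, ‖qRatioProdCoeff q a b x y n‖ ≤ C * r ^ n := by
  have hr0 : 0 < r := hX.trans_lt hr
  have hlt : ‖X * r⁻¹‖ < 1 := by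
    rw [← div_eq_mul_inv, Real.norm_of_nonneg (by positivity), div_lt_one hr0]
    exact hr
  obtain ⟨C, hC, hle⟩ := exists_norm_le_mul_pow_of_summable hr0.ne'
    (summable_norm_qRatioProdCoeff_mul_pow (q := ‖q‖) (by rwa [norm_norm]) (-A) (-B) hlt hlt)
  refine ⟨C, hC, fun a b x y ha hb hx hy n => ?_⟩
  have hn := hle n
  rw [Real.norm_of_nonneg hr0.le] at hn
  exact (norm_qRatioProdCoeff_le hq ha hb hx hy n).trans ((Real.le_norm_self _).trans hn)

end GeometricBounds

section qBinomial

variable {q a b x y w : ℂ}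

lemma tendsto_tsum_mul_pow {c : ℕ → ℂ} (hc : Summable fun n => ‖c n‖) :
    Tendsto (fun u : ℂ => ∑' n, c n * u ^ n) (𝓝 0) (𝓝 (c 0)) := by
  have hzero : ∑' n, c n * 0 ^ n = c 0 := by
    rw [tsum_eq_single 0 fun n hn => by rw [zero_pow hn, mul_zero], pow_zero, mul_one]
  rw [← hzero]
  refine tendsto_tsum_of_dominated_convergence hc
    (fun n => ((continuous_const.mul (continuous_pow n)).tendsto 0)) ?_
  filter_upwards [Metric.closedBall_mem_nhds (0 : ℂ) one_pos] with u hu n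
  rw [norm_mul, norm_pow]
  exact mul_le_of_le_one_right (norm_nonneg _)
    (pow_le_one₀ (norm_nonneg u) (mem_closedBall_zero_iff.mp hu))

lemma tendsto_tsum_mul_pow_pow (hq : ‖q‖ < 1) {c : ℕ → ℂ} (hc : Summable fun n => ‖c n‖) :
    Tendsto (fun k : ℕ => ∑' n, c n * (q ^ k) ^ n) atTop (𝓝 (c 0)) :=
  (tendsto_tsum_mul_pow hc).comp (tendsto_pow_atTop_nhds_zero_of_norm_lt_one hq)

lemma one_sub_mul_tsum_qRatioCoeff (hq : ‖q‖ < 1) (a : ℂ) (h : ‖x * w‖ < 1) :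
    (1 - x * w) * ∑' n, qRatioCoeff q a x n * w ^ n =
      (1 - a * w) * ∑' n, qRatioCoeff q a x n * (w * q) ^ n := by
  have hw := (summable_norm_qRatioCoeff_mul_pow hq a h).of_norm
  have hwq : Summable fun n => qRatioCoeff q a x n * (w * q) ^ n := by
    refine (summable_norm_qRatioCoeff_mul_pow hq a ?_).of_norm
    simpa only [pow_one, mul_assoc] using norm_mul_pow_lt_one hq.le h 1
  have hdiff : ∑' n, qRatioCoeff q a x (n + 1) * w ^ (n + 1) -
      ∑' n, qRatioCoeff q a x (n + 1) * (w * q) ^ (n + 1) =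
        x * w * ∑' n, qRatioCoeff q a x n * w ^ n -
          a * w * ∑' n, qRatioCoeff q a x n * (w * q) ^ n := by
    rw [← ((summable_nat_add_iff 1).mpr hw).tsum_sub ((summable_nat_add_iff 1).mpr hwq),
      ← tsum_mul_left, ← tsum_mul_left, ← (hw.mul_left _).tsum_sub (hwq.mul_left _)]
    refine tsum_congr fun n => ?_
    rw [mul_pow, mul_pow]
    linear_combination w ^ (n + 1) * qRatioCoeff_succ (qRegular_self hq) a x n
  have hw0 := hw.tsum_eq_zero_add
  have hwq0 := hwq.tsum_eq_zero_add
  simp only [qRatioCoeff_zero, pow_zero] at hw0 hwq0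
  linear_combination hw0 - hwq0 + hdiff

lemma tsum_qRatioCoeff_mul_qpochNat (hq : ‖q‖ < 1) (a : ℂ) (h : ‖x * w‖ < 1) (k : ℕ) :
    (∑' n, qRatioCoeff q a x n * w ^ n) * qpochNat q (x * w) k =
      qpochNat q (a * w) k * ∑' n, qRatioCoeff q a x n * w ^ n * (q ^ k) ^ n := by
  simp only [mul_assoc, ← mul_pow]
  induction k with
  | zero => simp
  | succ k ih =>
    have hk := one_sub_mul_tsum_qRatioCoeff hq a (x := x) (w := w * q ^ k)
      (by simpa only [mul_assoc] using norm_mul_pow_lt_one hq.le h k)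
    rw [qpochNat_succ, qpochNat_succ, ← mul_assoc, ih, pow_succ, ← mul_assoc w]
    linear_combination qpochNat q (a * w) k * hk

theorem tsum_qRatioCoeff_mul_pow (hq : ‖q‖ < 1) (a : ℂ) (h : ‖x * w‖ < 1) :
    ∑' n, qRatioCoeff q a x n * w ^ n = qinf q (a * w) / qinf q (x * w) := by
  rw [eq_div_iff (qinf_ne_zero_of_norm_lt_one hq h)]
  refine tendsto_nhds_unique ((tendsto_qpochNat hq (x * w)).const_mul _) ?_
  have hlim := (tendsto_qpochNat hq (a * w)).mul
    (tendsto_tsum_mul_pow_pow hq (summable_norm_qRatioCoeff_mul_pow hq a h))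
  rw [qRatioCoeff_zero, pow_zero, mul_one, mul_one] at hlim
  exact hlim.congr fun k => (tsum_qRatioCoeff_mul_qpochNat hq a h k).symm

theorem tsum_qRatioProdCoeff_mul_pow (hq : ‖q‖ < 1) (a b : ℂ) (hx : ‖x * w‖ < 1)
    (hy : ‖y * w‖ < 1) : ∑' n, qRatioProdCoeff q a b x y n * w ^ n =
      qinf q (a * w) * qinf q (b * w) / (qinf q (x * w) * qinf q (y * w)) := by
  simp only [qRatioProdCoeff_mul_pow]
  rw [← tsum_mul_tsum_eq_tsum_sum_antidiagonal_of_summable_norm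
    (summable_norm_qRatioCoeff_mul_pow hq a hx) (summable_norm_qRatioCoeff_mul_pow hq b hy),
    tsum_qRatioCoeff_mul_pow hq a hx, tsum_qRatioCoeff_mul_pow hq b hy, div_mul_div_comm]

end qBinomial

/-! ### Integer indices and the sum over `m` -/

section IntegerIndex

lemma eventually_mul_lt_one {m w : ℝ} (h : m * w < 1) : ∀ᶠ r in 𝓝[>] m, r * w < 1 :=
  (((continuous_mul_const w).tendsto m).mono_left nhdsWithin_le_nhds).eventually_lt_const h

lemma exists_gt_mul_lt_one {m w : ℝ} (h : m * w < 1) : ∃ r, m < r ∧ r * w < 1 :=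
  ((eventually_mem_nhdsWithin (s := Set.Ioi m)).and (eventually_mul_lt_one h)).exists

variable {q a γ P z : ℂ}

lemma qpoch_natCast (q a : ℂ) (n : ℕ) : qpoch q a n = qpochNat q a n := by
  simp [qpoch, qpochNat]

lemma qpoch_neg_natCast (q a : ℂ) (m : ℕ) :
    qpoch q a (-(m : ℤ)) = ∏ j ∈ range m, (1 - a * q ^ (-(j + 1 : ℤ)))⁻¹ := by
  rcases m.eq_zero_or_pos with rfl | hm
  · simp [qpoch]
  · rw [qpoch, if_neg (by lia), neg_neg, Int.toNat_natCast, ← prod_inv_distrib,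
      ← prod_range_reflect]
    refine prod_congr rfl fun j hj => ?_
    have hj' := mem_range.mp hj
    congr 4
    lia

lemma qpoch_add_one {N : ℤ} (h : N < 0 → a * q ^ N ≠ 1) :
    qpoch q a (N + 1) = qpoch q a N * (1 - a * q ^ N) := by
  rcases lt_or_ge N 0 with hN | hN
  · obtain ⟨m, rfl⟩ : ∃ m : ℕ, N = -((m + 1 : ℕ) : ℤ) := ⟨(-N - 1).toNat, by lia⟩
    rw [show -((m + 1 : ℕ) : ℤ) + 1 = -(m : ℤ) by push_cast; ring, qpoch_neg_natCast,
      qpoch_neg_natCast, prod_range_succ, ← Nat.cast_succ,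
      inv_mul_cancel_right₀ (sub_ne_zero.mpr (h hN).symm)]
  · lift N to ℕ using hN
    exact_mod_cast qpochNat_succ q a N

/-- The quotient `(γ;q)_N / (P;q)_N` for an arbitrary integer `N`. -/
noncomputable def qpochRatio (q γ P : ℂ) (N : ℤ) : ℂ := qpoch q γ N / qpoch q P N

/-- The sum over `m` of the triple series, with `j + k = n` fixed and `P = αβ`. -/
noncomputable def qpochRatioSum (q γ P z : ℂ) (n : ℕ) : ℂ :=
  ∑' m : ℕ, qRatioCoeff q (q / γ) 1 m * qpochRatio q γ P (n - m) * z ^ m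

lemma QRegular.mul_zpow_ne_one_of_neg (h : QRegular q (q / γ)) (hq : q ≠ 0) {N : ℤ} (hN : N < 0) :
    γ * q ^ N ≠ 1 := fun h1 => by
  obtain ⟨m, rfl⟩ : ∃ m : ℕ, N = -((m + 1 : ℕ) : ℤ) := ⟨(-N - 1).toNat, by lia⟩
  rw [zpow_neg, zpow_natCast, mul_inv_eq_one₀ (pow_ne_zero _ hq)] at h1
  apply h m
  rw [div_mul_eq_mul_div, ← pow_succ', h1, div_self (pow_ne_zero _ hq)]

lemma qpochRatio_add_one (hq : q ≠ 0) (hγ : QRegular q (q / γ)) (hP : ∀ N : ℤ, P * q ^ N ≠ 1)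
    (N : ℤ) :
    qpochRatio q γ P (N + 1) * (1 - P * q ^ N) = qpochRatio q γ P N * (1 - γ * q ^ N) := by
  have hPN : 1 - P * q ^ N ≠ 0 := sub_ne_zero.mpr (hP N).symm
  rw [qpochRatio, qpochRatio, qpoch_add_one fun hN => hγ.mul_zpow_ne_one_of_neg hq hN,
    qpoch_add_one fun _ => hP N, mul_div_mul_comm, mul_assoc, div_mul_cancel₀ _ hPN]

lemma qpochRatio_neg_natCast (hq : q ≠ 0) (hqq : QRegular q q) (hγ : γ ≠ 0) (P : ℂ) (m : ℕ) :
    qpochRatio q γ P (-(m : ℤ)) =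
      qpochNat q q m / qpochNat q (q / γ) m * qRatioCoeff q (q / γ) (P / γ) m := by
  rw [qpochRatio, qRatioCoeff, mul_comm, div_mul_div_cancel₀ (hqq.qpochNat_ne_zero m),
    qpoch_neg_natCast, qpoch_neg_natCast, qpochNat, ← prod_div_distrib, ← prod_div_distrib]
  refine prod_congr rfl fun j _ => ?_
  have hj : q ^ (j + 1) ≠ 0 := pow_ne_zero _ hq
  have hpow : q ^ (-(j + 1 : ℤ)) = (q ^ (j + 1))⁻¹ := by rw [zpow_neg]; norm_cast
  rw [inv_div_inv, hpow, ← mul_div_mul_left _ _ (neg_ne_zero.mpr (div_ne_zero hj hγ))]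
  congr 1 <;> field_simp <;> ring

lemma qRatioCoeff_mul_qpochRatio_neg (hq : q ≠ 0) (hqq : QRegular q q) (hγ0 : γ ≠ 0)
    (hγ : QRegular q (q / γ)) (P : ℂ) (m : ℕ) :
    qRatioCoeff q (q / γ) 1 m * qpochRatio q γ P (-(m : ℤ)) =
      qRatioCoeff q (q / γ) (P / γ) m := by
  rw [qpochRatio_neg_natCast hq hqq hγ0, qRatioCoeff_one_right, ← mul_assoc,
    div_mul_div_cancel₀ (hqq.qpochNat_ne_zero m), div_self (hγ.qpochNat_ne_zero m), one_mul]

lemma QRegular.exists_norm_qpochNat_div_le (h : QRegular q P) (hq : ‖q‖ < 1) (a : ℂ) :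
    ∃ C, 0 < C ∧ ∀ n, ‖qpochNat q a n / qpochNat q P n‖ ≤ C := by
  obtain ⟨C, hC, hle⟩ := h.exists_norm_inv_qpochNat_le hq
  refine ⟨Real.exp (‖a‖ / (1 - ‖q‖)) * C, by positivity, fun n => ?_⟩
  rw [div_eq_mul_inv, norm_mul]
  exact mul_le_mul (norm_qpochNat_le hq le_rfl n) (hle n) (norm_nonneg _) (Real.exp_nonneg _)

lemma exists_norm_qRatioCoeff_le_mul_pow (hq : ‖q‖ < 1) (a : ℂ) {x : ℂ} {r : ℝ} (hr : ‖x‖ < r) :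
    ∃ C, 0 < C ∧ ∀ n, ‖qRatioCoeff q a x n‖ ≤ C * r ^ n := by
  have hr0 : 0 < r := (norm_nonneg x).trans_lt hr
  have hlt : ‖x * (r : ℂ)⁻¹‖ < 1 := by
    rwa [norm_mul, norm_inv, Complex.norm_of_nonneg hr0.le, ← div_eq_mul_inv, div_lt_one hr0]
  obtain ⟨C, hC, hle⟩ := exists_norm_le_mul_pow_of_summable (Complex.ofReal_ne_zero.mpr hr0.ne')
    (summable_norm_qRatioCoeff_mul_pow hq a hlt)
  exact ⟨C, hC, fun n => by simpa only [Complex.norm_of_nonneg hr0.le] using hle n⟩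

lemma exists_norm_qpochRatio_sub_le (hq : ‖q‖ < 1) (hq0 : q ≠ 0) (hγ0 : γ ≠ 0)
    (hγ : QRegular q (q / γ)) (hP : QRegular q P) {r : ℝ} (hr : ‖P / γ‖ < r) :
    ∃ C, 0 < C ∧ ∀ n m : ℕ, ‖qpochRatio q γ P (n - m)‖ ≤ C * r ^ (m - n) := by
  have hr0 : 0 < r := (norm_nonneg _).trans_lt hr
  obtain ⟨C₁, hC₁, hpos⟩ := hP.exists_norm_qpochNat_div_le hq γ
  obtain ⟨C₂, hC₂, hneg⟩ := hγ.exists_norm_qpochNat_div_le hq q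
  obtain ⟨C₃, -, hcoeff⟩ := exists_norm_qRatioCoeff_le_mul_pow hq (q / γ) hr
  refine ⟨max C₁ (C₂ * C₃), by positivity, fun n m => ?_⟩
  rcases le_total m n with h | h
  · rw [← Nat.cast_sub h, Nat.sub_eq_zero_of_le h, pow_zero, mul_one, qpochRatio, qpoch_natCast,
      qpoch_natCast]
    exact (hpos _).trans (le_max_left _ _)
  · rw [← neg_sub, ← Nat.cast_sub h, qpochRatio_neg_natCast hq0 (qRegular_self hq) hγ0, norm_mul]
    calc _ ≤ C₂ * (C₃ * r ^ (m - n)) :=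
          mul_le_mul (hneg _) (hcoeff _) (norm_nonneg _) hC₂.le
      _ = C₂ * C₃ * r ^ (m - n) := (mul_assoc _ _ _).symm
      _ ≤ max C₁ (C₂ * C₃) * r ^ (m - n) := by gcongr; exact le_max_right _ _

lemma summable_qpochRatioSum (hq : ‖q‖ < 1) (hq0 : q ≠ 0) (hγ0 : γ ≠ 0)
    (hγ : QRegular q (q / γ)) (hP : QRegular q P) (hz : ‖P / γ * z‖ < 1) (n : ℕ) :
    Summable fun m : ℕ => qRatioCoeff q (q / γ) 1 m * qpochRatio q γ P (n - m) * z ^ m := by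
  obtain ⟨r, hr, hrz⟩ := exists_gt_mul_lt_one (by rwa [norm_mul] at hz)
  have hr0 : 0 < r := (norm_nonneg _).trans_lt hr
  obtain ⟨C₁, -, hratio⟩ := exists_norm_qpochRatio_sub_le hq hq0 hγ0 hγ hP hr
  obtain ⟨C₂, hC₂, hcoeff⟩ := (qRegular_self hq).exists_norm_qpochNat_div_le hq (q / γ)
  have hgeom : Summable fun m : ℕ => C₂ * C₁ * ‖z‖ ^ n * (r * ‖z‖) ^ m :=
    (summable_geometric_of_lt_one (by positivity) hrz).mul_left _
  rw [← summable_nat_add_iff n]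
  refine Summable.of_norm_bounded hgeom fun m => ?_
  have hm := hratio n (m + n)
  rw [Nat.add_sub_cancel] at hm
  rw [norm_mul, norm_mul, norm_pow, qRatioCoeff_one_right]
  calc _ ≤ C₂ * (C₁ * r ^ m) * ‖z‖ ^ (m + n) := by gcongr; exact hcoeff _
    _ = C₂ * C₁ * ‖z‖ ^ n * (r * ‖z‖) ^ m := by ring

lemma qinf_mul_qpochRatioSum_zero (hq : ‖q‖ < 1) (hq0 : q ≠ 0) (hγ0 : γ ≠ 0)
    (hγ : QRegular q (q / γ)) (hz : ‖P / γ * z‖ < 1) :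
    qinf q (P / γ * z) * qpochRatioSum q γ P z 0 = qinf q (q / γ * z) := by
  have hsum := tsum_qRatioCoeff_mul_pow hq (q / γ) hz
  simp only [← qRatioCoeff_mul_qpochRatio_neg hq0 (qRegular_self hq) hγ0 hγ P] at hsum
  simp only [qpochRatioSum, Nat.cast_zero, zero_sub]
  rw [hsum, mul_div_cancel₀ _ (qinf_ne_zero_of_norm_lt_one hq hz)]

lemma norm_mul_mul_lt_one (hq : ‖q‖ < 1) (hz : ‖a * z‖ < 1) : ‖a * (q * z)‖ < 1 := by
  simpa only [pow_one, mul_assoc, mul_comm z] using norm_mul_pow_lt_one hq.le hz 1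

lemma qpochRatioSum_succ (hq : ‖q‖ < 1) (hq0 : q ≠ 0) (hγ0 : γ ≠ 0)
    (hγ : QRegular q (q / γ)) (hP : ∀ N : ℤ, P * q ^ N ≠ 1) (hz : ‖P / γ * z‖ < 1) (n : ℕ) :
    qpochRatioSum q γ P z (n + 1) * (1 - P * q ^ n) =
      (z - γ * q ^ n) * qpochRatioSum q γ P z n +
        (1 - q / γ * z) * qpochRatioSum q γ P (q * z) n := by
  have hPreg : QRegular q P := fun n => by simpa only [zpow_natCast] using hP n
  have hqz := norm_mul_mul_lt_one hq hz
  have hsum := summable_qpochRatioSum hq hq0 hγ0 hγ hPreg hz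
  have hsumq := summable_qpochRatioSum hq hq0 hγ0 hγ hPreg hqz
  have hcoeff : qpochRatioSum q γ P z (n + 1) - qpochRatioSum q γ P (q * z) (n + 1) =
      z * qpochRatioSum q γ P z n - q / γ * z * qpochRatioSum q γ P (q * z) n := by
    unfold qpochRatioSum
    rw [← (hsum _).tsum_sub (hsumq _), ((hsum _).sub (hsumq _)).tsum_eq_zero_add,
      ← tsum_mul_left, ← tsum_mul_left, ← ((hsum n).mul_left _).tsum_sub ((hsumq n).mul_left _),
      pow_zero, pow_zero, sub_self, zero_add]
    refine tsum_congr fun m => ?_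
    rw [show ((n + 1 : ℕ) : ℤ) - ((m + 1 : ℕ) : ℤ) = n - m by push_cast; ring, mul_pow, mul_pow]
    linear_combination z ^ (m + 1) * qpochRatio q γ P (n - m) *
      qRatioCoeff_succ (qRegular_self hq) (q / γ) 1 m
  have hratio : qpochRatioSum q γ P (q * z) (n + 1) - P * q ^ n * qpochRatioSum q γ P z (n + 1) =
      qpochRatioSum q γ P (q * z) n - γ * q ^ n * qpochRatioSum q γ P z n := by
    unfold qpochRatioSum
    rw [← tsum_mul_left, ← tsum_mul_left, ← (hsumq _).tsum_sub ((hsum _).mul_left _),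
      ← (hsumq n).tsum_sub ((hsum n).mul_left _)]
    refine tsum_congr fun m => ?_
    have hpow : q ^ n = q ^ m * q ^ ((n : ℤ) - m) := by
      rw [← zpow_natCast, ← zpow_natCast, ← zpow_add₀ hq0, add_sub_cancel]
    rw [show ((n + 1 : ℕ) : ℤ) - m = n - m + 1 by push_cast; ring, mul_pow, hpow]
    linear_combination qRatioCoeff q (q / γ) 1 m * q ^ m * z ^ m *
      qpochRatio_add_one hq0 hγ hP (n - m)
  linear_combination hcoeff + hratio

theorem qpochRatioSum_eq (hq : ‖q‖ < 1) (hq0 : q ≠ 0) (hγ0 : γ ≠ 0) (hγ : QRegular q (q / γ))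
    (hP : ∀ N : ℤ, P * q ^ N ≠ 1) (hz : ‖P / γ * z‖ < 1) (n : ℕ) :
    qpochNat q P n * qinf q (P / γ * z) * qpochRatioSum q γ P z n =
      qpochNat q q n * qinf q (q / γ * z) * qRatioProdCoeff q γ (P / γ * z) 1 z n := by
  induction n generalizing z with
  | zero =>
    simpa only [qpochNat_zero, qRatioProdCoeff_zero, one_mul, mul_one] using
      qinf_mul_qpochRatioSum_zero hq hq0 hγ0 hγ hz
  | succ n ih =>
    have hrec := qRatioProdCoeff_succ_dilate (qRegular_self hq) γ (P / γ) z n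
    have hP' := qinf_eq_one_sub_mul hq (P / γ * z)
    have hq' := qinf_eq_one_sub_mul hq (q / γ * z)
    rw [mul_assoc, mul_comm z q] at hP' hq'
    rw [qpochNat_succ, qpochNat_succ, ← pow_succ']
    linear_combination
      qpochNat q P n * qinf q (P / γ * z) * qpochRatioSum_succ hq hq0 hγ0 hγ hP hz n -
        qpochNat q q n * qinf q (q / γ * z) * hrec + (z - γ * q ^ n) * ih hz +
        (1 - P / γ * z) * (1 - q / γ * z) * ih (norm_mul_mul_lt_one hq hz) +
        (1 - q / γ * z) * qpochNat q P n * qpochRatioSum q γ P (q * z) n * hP' -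
        (1 - P / γ * z) * qpochNat q q n *
          qRatioProdCoeff q γ (P / γ * (q * z)) 1 (q * z) n * hq'

end IntegerIndex

/-! ### Reduction of the triple series -/

section TripleSeries

variable {q α β γ x y z : ℂ}

lemma qGGRTerm_eq (q α β γ x y z : ℂ) (j k m : ℕ) :
    qGGRTerm q α β γ x y z (j, k, m) =
      qRatioCoeff q (α * x) x j * qRatioCoeff q (β * y) y k *
        (qRatioCoeff q (q / γ) 1 m * qpochRatio q γ (α * β) (((j + k : ℕ) : ℤ) - m) * z ^ m) := by
  simp only [qGGRTerm, qRatioCoeff_mul_left, qRatioCoeff_one_right, qpochRatio, qpoch_natCast,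
    Nat.cast_add, div_eq_mul_inv, mul_inv]
  ring

lemma pow_mul_pow_mul_pow_sub_le {s w u : ℝ} (hs : 0 ≤ s) (hw : 0 ≤ w) (hu : 0 ≤ u) (hu1 : u ≤ 1)
    (hsu : s ≤ u ^ 2) (hswu : s * w ≤ u ^ 2) (n m : ℕ) :
    s ^ n * w ^ m * s ^ (m - n) ≤ u ^ (n + m) := by
  rcases le_total n m with h | h
  · calc s ^ n * w ^ m * s ^ (m - n) = (s * w) ^ m := by
          rw [mul_right_comm, ← pow_add, Nat.add_sub_of_le h, mul_pow]
      _ ≤ (u ^ 2) ^ m := by gcongr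
      _ = u ^ (2 * m) := (pow_mul u 2 m).symm
      _ ≤ u ^ (n + m) := pow_le_pow_of_le_one hu hu1 (by lia)
  · calc s ^ n * w ^ m * s ^ (m - n) = s ^ (n - m) * (s * w) ^ m := by
          rw [Nat.sub_eq_zero_of_le h, pow_zero, mul_one, mul_pow, ← mul_assoc, ← pow_add,
            Nat.sub_add_cancel h]
      _ ≤ (u ^ 2) ^ (n - m) * (u ^ 2) ^ m := by gcongr
      _ = u ^ (2 * n) := by rw [← pow_add, Nat.sub_add_cancel h, pow_mul]
      _ ≤ u ^ (n + m) := pow_le_pow_of_le_one hu hu1 (by lia)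

lemma summable_mul_pow_pow_pow (C : ℝ) {u : ℝ} (hu : 0 ≤ u) (hu1 : u < 1) :
    Summable fun p : ℕ × ℕ × ℕ => C * u ^ (p.1 + p.2.1 + p.2.2) := by
  have hgeom := summable_geometric_of_lt_one hu hu1
  have hpow (n : ℕ) : 0 ≤ u ^ n := pow_nonneg hu n
  refine (Summable.congr ?_ fun p => by rw [pow_add, pow_add, mul_assoc]).mul_left C
  exact hgeom.mul_of_nonneg (hgeom.mul_of_nonneg hgeom hpow hpow) hpow
    fun p => mul_nonneg (hpow _) (hpow _)

theorem summable_norm_qGGRTerm (hq : ‖q‖ < 1) (hq0 : q ≠ 0) (hγ0 : γ ≠ 0)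
    (hγ : QRegular q (q / γ)) (hP : QRegular q (α * β))
    (hlt1 : max (max ‖x‖ ‖y‖) ‖α * β / γ‖ < 1)
    (hlt2 : max (max ‖x‖ ‖y‖) ‖α * β / γ‖ * ‖z‖ < 1) :
    Summable fun p => ‖qGGRTerm q α β γ x y z p‖ := by
  obtain ⟨s, hs, hsw⟩ := exists_gt_mul_lt_one (w := max 1 ‖z‖)
    (by
      rw [mul_max_of_nonneg _ _ (le_max_of_le_right (norm_nonneg (α * β / γ))), mul_one]
      exact max_lt hlt1 hlt2)
  obtain ⟨⟨hx, hy⟩, hPγ⟩ : (‖x‖ < s ∧ ‖y‖ < s) ∧ ‖α * β / γ‖ < s := by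
    simpa only [max_lt_iff] using hs
  have hs0 : 0 ≤ s := (norm_nonneg x).trans hx.le
  obtain ⟨C₁, hC₁, hj⟩ := exists_norm_qRatioCoeff_le_mul_pow hq (α * x) hx
  obtain ⟨C₂, hC₂, hk⟩ := exists_norm_qRatioCoeff_le_mul_pow hq (β * y) hy
  obtain ⟨C₃, hC₃, hm⟩ := (qRegular_self hq).exists_norm_qpochNat_div_le hq (q / γ)
  obtain ⟨C₄, hC₄, hratio⟩ := exists_norm_qpochRatio_sub_le hq hq0 hγ0 hγ hP hPγ
  set u := √(s * max 1 ‖z‖)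
  have hu1 : u < 1 := (Real.sqrt_lt' one_pos).mpr (by rwa [one_pow])
  have hu : u ^ 2 = s * max 1 ‖z‖ := Real.sq_sqrt (by positivity)
  have hsu : s ≤ u ^ 2 := hu ▸ le_mul_of_one_le_right hs0 (le_max_left _ _)
  have hszu : s * ‖z‖ ≤ u ^ 2 := hu ▸ mul_le_mul_of_nonneg_left (le_max_right _ _) hs0
  refine Summable.of_norm_bounded
    (summable_mul_pow_pow_pow (C₁ * C₂ * C₃ * C₄) (Real.sqrt_nonneg _) hu1) ?_
  rintro ⟨j, k, m⟩
  rw [norm_norm, qGGRTerm_eq, qRatioCoeff_one_right]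
  simp only [norm_mul, norm_pow]
  calc _ ≤ C₁ * s ^ j * (C₂ * s ^ k) * (C₃ * (C₄ * s ^ (m - (j + k))) * ‖z‖ ^ m) := by
        gcongr
        exacts [hj j, hk k, hm m, hratio _ m]
    _ = C₁ * C₂ * C₃ * C₄ * (s ^ (j + k) * ‖z‖ ^ m * s ^ (m - (j + k))) := by ring
    _ ≤ C₁ * C₂ * C₃ * C₄ * u ^ (j + k + m) := by
        gcongr
        exact pow_mul_pow_mul_pow_sub_le hs0 (norm_nonneg z) (Real.sqrt_nonneg _) hu1.le hsu hszu
          (j + k) m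

lemma tsum_prod_eq_tsum_sum_antidiagonal {f : ℕ × ℕ → ℂ} (hf : Summable f) :
    ∑' p, f p = ∑' n, ∑ p ∈ antidiagonal n, f p := by
  rw [← HasAntidiagonal.sigmaAntidiagonalEquivProd.tsum_eq f]
  have hsigma := HasAntidiagonal.sigmaAntidiagonalEquivProd.summable_iff.mpr hf
  refine hsigma.tsum_sigma.trans (tsum_congr fun n => ?_)
  rw [tsum_fintype]
  exact sum_coe_sort (antidiagonal n) f

lemma tsum_qGGRTerm_eq_tsum (hs : Summable (qGGRTerm q α β γ x y z)) :
    ∑' p, qGGRTerm q α β γ x y z p =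
      ∑' n, qRatioProdCoeff q (α * x) (β * y) x y n * qpochRatioSum q γ (α * β) z n := by
  have hassoc := (Equiv.prodAssoc ℕ ℕ ℕ).summable_iff.mpr hs
  have hinner (p : ℕ × ℕ) : ∑' m, qGGRTerm q α β γ x y z (p.1, p.2, m) =
      qRatioCoeff q (α * x) x p.1 * qRatioCoeff q (β * y) y p.2 *
        qpochRatioSum q γ (α * β) z (p.1 + p.2) := by
    simp only [qGGRTerm_eq, tsum_mul_left, qpochRatioSum]
  have hsum := hassoc.prod.congr hinner
  rw [← (Equiv.prodAssoc ℕ ℕ ℕ).tsum_eq]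
  refine hassoc.tsum_prod.trans ((tsum_congr hinner).trans ?_)
  refine (tsum_prod_eq_tsum_sum_antidiagonal hsum).trans ?_
  refine tsum_congr fun n => ?_
  rw [qRatioProdCoeff_eq_sum, sum_mul]
  exact sum_congr rfl fun p hp => by rw [mem_antidiagonal.mp hp]

/-- The single series to which the triple series reduces, up to infinite products, when
`A = αx` and `b = β / x`. In these parameters it has a symmetry exchanging `z` and `b`, and no
longer involves `α` and `β`. -/
noncomputable def kernelSum (q x y A γ z b : ℂ) : ℂ :=
  ∑' n, qpochNat q q n * qinf q (A * b * q ^ n) * qRatioProdCoeff q A (x * y * b) x y n *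
    qRatioProdCoeff q γ (A * b * z / γ) 1 z n

theorem tsum_qGGRTerm_mul (hq : ‖q‖ < 1) (hq0 : q ≠ 0) (hγ0 : γ ≠ 0) (hγ : QRegular q (q / γ))
    (hP : ∀ N : ℤ, α * β * q ^ N ≠ 1) (hz : ‖α * β * z / γ‖ < 1) (hx : x ≠ 0)
    (hs : Summable (qGGRTerm q α β γ x y z)) :
    (∑' p, qGGRTerm q α β γ x y z p) * (qinf q (α * β * z / γ) * qinf q (α * β)) =
      qinf q (q * z / γ) * kernelSum q x y (α * x) γ z (β / x) := by
  rw [tsum_qGGRTerm_eq_tsum hs, kernelSum, ← tsum_mul_left, ← tsum_mul_right]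
  refine tsum_congr fun n => ?_
  have hAb : α * x * (β / x) = α * β := by field_simp
  have hxyb : x * y * (β / x) = β * y := by field_simp
  rw [mul_div_right_comm] at hz
  rw [hAb, hxyb, mul_div_right_comm (α * β), mul_div_right_comm q,
    qinf_eq_qpochNat_mul hq (α * β) n]
  linear_combination qinf q (α * β * q ^ n) * qRatioProdCoeff q (α * x) (β * y) x y n *
    qpochRatioSum_eq hq hq0 hγ0 hγ hP hz n

end TripleSeries

/-! ### The symmetry between `z` and `b` -/

section KernelSymmetry

variable {q x y z b : ℂ}

lemma exists_forall_mul_norm_lt_one (s : Finset ℂ) (h : ∀ w ∈ s, ‖x * w‖ < 1 ∧ ‖y * w‖ < 1) :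
    ∃ r, ‖x‖ < r ∧ ‖y‖ < r ∧ ∀ w ∈ s, r * ‖w‖ < 1 := by
  have hmax : ∀ w ∈ s, max ‖x‖ ‖y‖ * ‖w‖ < 1 := fun w hw => by
    rw [max_mul_of_nonneg _ _ (norm_nonneg w), ← norm_mul, ← norm_mul]
    exact max_lt (h w hw).1 (h w hw).2
  obtain ⟨r, hr, hrw⟩ := ((eventually_mem_nhdsWithin (s := Set.Ioi (max ‖x‖ ‖y‖))).and
    ((eventually_all_finset s).mpr fun w hw => eventually_mul_lt_one (hmax w hw))).exists
  exact ⟨r, (le_max_left _ _).trans_lt hr, (le_max_right _ _).trans_lt hr, hrw⟩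

lemma exists_norm_qpochNat_mul_qRatioProdCoeff_le (hq : ‖q‖ < 1) (A : ℂ) {r : ℝ} (hx : ‖x‖ < r)
    (hy : ‖y‖ < r) :
    ∃ C, 0 < C ∧ ∀ n, ‖qpochNat q q n * qRatioProdCoeff q A 0 x y n‖ ≤ C * r ^ n := by
  obtain ⟨C, hC, hle⟩ := exists_norm_qRatioProdCoeff_le_mul_pow (𝕜 := ℂ) hq ‖A‖ 0
    (le_max_of_le_left (norm_nonneg x)) (max_lt hx hy)
  refine ⟨Real.exp (‖q‖ / (1 - ‖q‖)) * C, by positivity, fun n => ?_⟩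
  rw [norm_mul, mul_assoc]
  exact mul_le_mul (norm_qpochNat_le hq le_rfl n)
    (hle A 0 x y le_rfl norm_zero.le (le_max_left _ _) (le_max_right _ _) n) (norm_nonneg _)
    (Real.exp_nonneg _)

/-- Up to a power of `1 - q`, the `n`-th `q`-derivative in `b` of the series
`∑ i, qRatioProdCoeff q A 0 x y i * b ^ i`, which sums to `(Ab;q)_∞ / ((xb;q)_∞ (yb;q)_∞)`. -/
noncomputable def qDerivSum (q A x y : ℂ) (n : ℕ) (b : ℂ) : ℂ :=
  ∑' i, qpochNat q q (n + i) * qRatioProdCoeff q A 0 x y (n + i) * qRatioCoeff q 0 b i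

lemma summable_qDerivSum (hq : ‖q‖ < 1) (A : ℂ) (hxb : ‖x * b‖ < 1) (hyb : ‖y * b‖ < 1) (n : ℕ) :
    Summable fun i =>
      qpochNat q q (n + i) * qRatioProdCoeff q A 0 x y (n + i) * qRatioCoeff q 0 b i := by
  obtain ⟨r, hxr, hyr, hr⟩ := exists_forall_mul_norm_lt_one {b}
    (by simpa only [mem_singleton, forall_eq] using ⟨hxb, hyb⟩)
  have hr0 : 0 < r := (norm_nonneg x).trans_lt hxr
  obtain ⟨C, -, hle⟩ := exists_norm_qpochNat_mul_qRatioProdCoeff_le hq A hxr hyr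
  have hbr : ‖b * (r : ℂ)‖ < 1 := by
    rw [mul_comm, norm_mul, Complex.norm_of_nonneg hr0.le]
    exact hr b (mem_singleton_self b)
  refine Summable.of_norm_bounded
    ((summable_norm_qRatioCoeff_mul_pow hq 0 hbr).mul_left (C * r ^ n)) fun i => ?_
  rw [norm_mul, norm_mul (qRatioCoeff q 0 b i), norm_pow, Complex.norm_of_nonneg hr0.le]
  calc _ ≤ C * r ^ (n + i) * ‖qRatioCoeff q 0 b i‖ := by gcongr; exact hle _
    _ = C * r ^ n * (‖qRatioCoeff q 0 b i‖ * r ^ i) := by ring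

lemma qDerivSum_sub (hq : ‖q‖ < 1) (A : ℂ) (hxb : ‖x * b‖ < 1) (hyb : ‖y * b‖ < 1) (n : ℕ) :
    qDerivSum q A x y n b - qDerivSum q A x y n (q * b) = b * qDerivSum q A x y (n + 1) b := by
  have hs := summable_qDerivSum hq A hxb hyb n
  have hsq := summable_qDerivSum hq A (norm_mul_mul_lt_one hq hxb) (norm_mul_mul_lt_one hq hyb) n
  unfold qDerivSum
  rw [← hs.tsum_sub hsq, (hs.sub hsq).tsum_eq_zero_add, ← tsum_mul_left]
  simp only [qRatioCoeff_zero, sub_self, zero_add]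
  refine tsum_congr fun i => ?_
  have hdilate := qRatioCoeff_mul_mul q 0 b q (i + 1)
  rw [mul_zero] at hdilate
  rw [hdilate, add_right_comm n 1 i, add_assoc n i 1]
  linear_combination qpochNat q q (n + (i + 1)) * qRatioProdCoeff q A 0 x y (n + (i + 1)) *
    qRatioCoeff_succ (qRegular_self hq) 0 b i

lemma qDerivSum_zero (hq : ‖q‖ < 1) (A : ℂ) (hxb : ‖x * b‖ < 1) (hyb : ‖y * b‖ < 1) :
    qinf q (x * b) * qinf q (y * b) * qDerivSum q A x y 0 b = qinf q (A * b) := by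
  have hsum := tsum_qRatioProdCoeff_mul_pow hq A 0 hxb hyb
  rw [zero_mul, qinf_zero, mul_one, eq_div_iff (mul_ne_zero (qinf_ne_zero_of_norm_lt_one hq hxb)
    (qinf_ne_zero_of_norm_lt_one hq hyb))] at hsum
  rw [← hsum, mul_comm, qDerivSum]
  congr 1
  refine tsum_congr fun i => ?_
  rw [zero_add, qRatioCoeff_zero_left, mul_div_assoc', mul_assoc,
    mul_div_cancel_left₀ _ ((qRegular_self hq).qpochNat_ne_zero i)]

lemma qDerivSum_apply_zero (q A x y : ℂ) (n : ℕ) :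
    qDerivSum q A x y n 0 = qpochNat q q n * qRatioProdCoeff q A 0 x y n := by
  rw [qDerivSum, tsum_eq_single 0 fun i hi => by
    rw [qRatioCoeff_zero_left, zero_pow hi, zero_div, mul_zero], add_zero, qRatioCoeff_zero,
    mul_one]

lemma qDerivSum_eq (hq : ‖q‖ < 1) (A : ℂ) (hxb : ‖x * b‖ < 1) (hyb : ‖y * b‖ < 1) (n : ℕ) :
    qinf q (x * b) * qinf q (y * b) * qDerivSum q A x y n b =
      qpochNat q q n * qinf q (A * b * q ^ n) * qRatioProdCoeff q A (x * y * b) x y n := by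
  induction n generalizing b with
  | zero =>
    rw [qDerivSum_zero hq A hxb hyb, qpochNat_zero, qRatioProdCoeff_zero, pow_zero, one_mul,
      mul_one, mul_one]
  | succ n ih =>
    rcases eq_or_ne b 0 with rfl | hb
    · simp only [mul_zero, zero_mul, qinf_zero, one_mul, mul_one, qDerivSum_apply_zero]
    · apply mul_left_cancel₀ hb
      have hstep := qDerivSum_sub hq A hxb hyb n
      have ihq := ih (norm_mul_mul_lt_one hq hxb) (norm_mul_mul_lt_one hq hyb)
      have hrec := qRatioProdCoeff_succ_balanced (qRegular_self hq) A b x y n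
      have hx := qinf_eq_one_sub_mul hq (x * b)
      have hy := qinf_eq_one_sub_mul hq (y * b)
      have hA := qinf_eq_one_sub_mul hq (A * b * q ^ n)
      rw [mul_assoc, mul_comm b q] at hx hy
      rw [mul_assoc (A * b), ← pow_succ] at hA
      rw [show A * (q * b) * q ^ n = A * b * q ^ (n + 1) by ring] at ihq
      rw [mul_comm b q] at hrec
      rw [qpochNat_succ, ← pow_succ']
      calc b * (qinf q (x * b) * qinf q (y * b) * qDerivSum q A x y (n + 1) b)
          = qinf q (x * b) * qinf q (y * b) * qDerivSum q A x y n b -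
              (1 - x * b) * (1 - y * b) *
                (qinf q (x * (q * b)) * qinf q (y * (q * b)) *
                  qDerivSum q A x y n (q * b)) := by
            rw [hx, hy]
            linear_combination -((1 - x * b) * qinf q (x * (q * b)) *
              ((1 - y * b) * qinf q (y * (q * b)))) * hstep
        _ = _ := by
            rw [ih hxb hyb, ihq, hA]
            linear_combination -(qinf q (A * b * q ^ (n + 1)) * qpochNat q q n) * hrec

/-- The coefficient of `w ^ N` in `(γw;q)_∞ (Abzw/γ;q)_∞ / ((w;q)_∞ (zw;q)_∞ (bw;q)_∞)`. -/
noncomputable def kernelCoeff (q A γ z b : ℂ) (N : ℕ) : ℂ :=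
  PowerSeries.coeff N (qRatioProd q γ (A * b * z / γ) 1 z * qRatio q 0 b)

lemma kernelCoeff_swap (hq : ‖q‖ < 1) (A γ z b : ℂ) :
    kernelCoeff q A γ z b = kernelCoeff q A γ b z := by
  funext N
  have hsplit := qRatio_eq_mul (qRegular_self hq)
  rw [kernelCoeff, kernelCoeff, qRatioProd, qRatioProd, hsplit (A * b * z / γ) z,
    hsplit (A * z * b / γ) b, mul_right_comm A z b]
  refine congrArg (PowerSeries.coeff N) ?_
  ring

lemma kernelCoeff_eq_sum (q A γ z b : ℂ) (N : ℕ) :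
    kernelCoeff q A γ z b N = ∑ p ∈ antidiagonal N,
      qRatioProdCoeff q γ (A * b * z / γ) 1 z p.1 * qRatioCoeff q 0 b p.2 := by
  simp only [kernelCoeff, PowerSeries.coeff_mul, qRatioProdCoeff, qRatio, PowerSeries.coeff_mk]

lemma summable_kernel_double (hq : ‖q‖ < 1) (A a c : ℂ) (hx : ‖x‖ < 1) (hy : ‖y‖ < 1)
    (hxz : ‖x * z‖ < 1) (hyz : ‖y * z‖ < 1) (hxb : ‖x * b‖ < 1) (hyb : ‖y * b‖ < 1) :
    Summable fun p : ℕ × ℕ =>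
      qpochNat q q (p.1 + p.2) * qRatioProdCoeff q A 0 x y (p.1 + p.2) *
        (qRatioProdCoeff q a c 1 z p.1 * qRatioCoeff q 0 b p.2) := by
  obtain ⟨r, hxr, hyr, hr⟩ := exists_forall_mul_norm_lt_one {1, z, b} (by
    simpa only [mem_insert, mem_singleton, forall_eq_or_imp, forall_eq, mul_one]
      using ⟨⟨hx, hy⟩, ⟨hxz, hyz⟩, hxb, hyb⟩)
  have hr0 : 0 < r := (norm_nonneg x).trans_lt hxr
  obtain ⟨C, -, hle⟩ := exists_norm_qpochNat_mul_qRatioProdCoeff_le hq A hxr hyr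
  have hwr (w : ℂ) (hw : w ∈ ({1, z, b} : Finset ℂ)) : ‖w * (r : ℂ)‖ < 1 := by
    rw [mul_comm, norm_mul, Complex.norm_of_nonneg hr0.le]
    exact hr w hw
  have hprod := (summable_norm_qRatioProdCoeff_mul_pow hq a c (hwr 1 (by simp))
    (hwr z (by simp))).mul_of_nonneg (summable_norm_qRatioCoeff_mul_pow hq 0 (hwr b (by simp)))
    (fun _ => norm_nonneg _) fun _ => norm_nonneg _
  refine Summable.of_norm_bounded (hprod.mul_left C) fun ⟨n, i⟩ => ?_
  simp only [norm_mul, norm_pow, Complex.norm_of_nonneg hr0.le]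
  rw [← norm_mul]
  calc _ ≤ C * r ^ (n + i) * (‖qRatioProdCoeff q a c 1 z n‖ * ‖qRatioCoeff q 0 b i‖) := by
        gcongr
        exact hle _
    _ = _ := by ring

lemma kernelSum_eq (hq : ‖q‖ < 1) (A γ : ℂ) (hx : ‖x‖ < 1) (hy : ‖y‖ < 1)
    (hxz : ‖x * z‖ < 1) (hyz : ‖y * z‖ < 1) (hxb : ‖x * b‖ < 1) (hyb : ‖y * b‖ < 1) :
    kernelSum q x y A γ z b = qinf q (x * b) * qinf q (y * b) *
      ∑' N, qpochNat q q N * qRatioProdCoeff q A 0 x y N * kernelCoeff q A γ z b N := by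
  have hdouble := summable_kernel_double hq A γ (A * b * z / γ) hx hy hxz hyz hxb hyb
  have hrows := hdouble.tsum_prod
  have hdiag := tsum_prod_eq_tsum_sum_antidiagonal hdouble
  have hrow (n : ℕ) : qpochNat q q n * qinf q (A * b * q ^ n) *
      qRatioProdCoeff q A (x * y * b) x y n * qRatioProdCoeff q γ (A * b * z / γ) 1 z n =
        qinf q (x * b) * qinf q (y * b) * ∑' i, qpochNat q q (n + i) *
          qRatioProdCoeff q A 0 x y (n + i) *
            (qRatioProdCoeff q γ (A * b * z / γ) 1 z n * qRatioCoeff q 0 b i) := by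
    rw [← qDerivSum_eq hq A hxb hyb, qDerivSum, mul_assoc, ← tsum_mul_right]
    exact congrArg _ (tsum_congr fun i => by ring)
  rw [kernelSum, tsum_congr hrow, tsum_mul_left, ← hrows, hdiag]
  refine congrArg _ (tsum_congr fun N => ?_)
  rw [kernelCoeff_eq_sum, mul_sum]
  exact sum_congr rfl fun p hp => by rw [mem_antidiagonal.mp hp]

theorem kernelSum_swap (hq : ‖q‖ < 1) (A γ : ℂ) (hx : ‖x‖ < 1) (hy : ‖y‖ < 1)
    (hxz : ‖x * z‖ < 1) (hyz : ‖y * z‖ < 1) (hxb : ‖x * b‖ < 1) (hyb : ‖y * b‖ < 1) :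
    qinf q (x * z) * qinf q (y * z) * kernelSum q x y A γ z b =
      qinf q (x * b) * qinf q (y * b) * kernelSum q x y A γ b z := by
  rw [kernelSum_eq hq A γ hx hy hxz hyz hxb hyb, kernelSum_eq hq A γ hx hy hxb hyb hxz hyz,
    kernelCoeff_swap hq A γ z b]
  ring

end KernelSymmetry

/-! ### The nonterminating `q`-Vandermonde sum -/

section Phi21

variable {q b c d e u : ℂ}

/-- The coefficient `(c;q)_l (d;q)_l / ((q;q)_l (e;q)_l)` of `u ^ l` in `₂φ₁[c, d; e; q, u]`. -/
noncomputable def phi21Coeff (q c d e : ℂ) (l : ℕ) : ℂ :=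
  qpochNat q c l * qpochNat q d l / (qpochNat q q l * qpochNat q e l)

/-- The basic hypergeometric series `₂φ₁[c, d; e; q, u]`. -/
noncomputable def phi21 (q c d e u : ℂ) : ℂ := ∑' l, phi21Coeff q c d e l * u ^ l

lemma phi21Coeff_comm (q c d e : ℂ) (l : ℕ) : phi21Coeff q c d e l = phi21Coeff q d c e l := by
  rw [phi21Coeff, phi21Coeff, mul_comm (qpochNat q c l)]

lemma phi21_comm (q c d e u : ℂ) : phi21 q c d e u = phi21 q d c e u := by
  simp only [phi21, phi21Coeff_comm q c d e]

lemma exists_norm_phi21Coeff_le (hq : ‖q‖ < 1) (he : QRegular q e) (R : ℝ) :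
    ∃ C, 0 < C ∧ ∀ c d : ℂ, ‖c‖ ≤ R → ‖d‖ ≤ R → ∀ l, ‖phi21Coeff q c d e l‖ ≤ C := by
  obtain ⟨C₁, hC₁, hle₁⟩ := (qRegular_self hq).exists_norm_inv_qpochNat_le hq
  obtain ⟨C₂, hC₂, hle₂⟩ := he.exists_norm_inv_qpochNat_le hq
  refine ⟨Real.exp (R / (1 - ‖q‖)) * Real.exp (R / (1 - ‖q‖)) * (C₁ * C₂), by positivity,
    fun c d hc hd l => ?_⟩
  rw [phi21Coeff, div_eq_mul_inv, mul_inv, norm_mul, norm_mul, norm_mul]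
  gcongr
  exacts [norm_qpochNat_le hq hc l, norm_qpochNat_le hq hd l, hle₁ l, hle₂ l]

lemma summable_phi21 (hq : ‖q‖ < 1) (he : QRegular q e) (hu : ‖u‖ < 1) (c d : ℂ) :
    Summable fun l => phi21Coeff q c d e l * u ^ l := by
  obtain ⟨C, -, hle⟩ := exists_norm_phi21Coeff_le hq he (max ‖c‖ ‖d‖)
  refine Summable.of_norm_bounded
    ((summable_geometric_of_lt_one (norm_nonneg u) hu).mul_left C) fun l => ?_
  rw [norm_mul, norm_pow]
  gcongr
  exact hle c d (le_max_left _ _) (le_max_right _ _) l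

lemma continuous_phi21 (hq : ‖q‖ < 1) (he : QRegular q e) (hu : ‖u‖ < 1) (c : ℂ) :
    Continuous fun d => phi21 q c d e u := by
  refine continuous_iff_continuousAt.mpr fun d₀ => ?_
  obtain ⟨C, -, hle⟩ := exists_norm_phi21Coeff_le hq he (max ‖c‖ (‖d₀‖ + 1))
  refine tendsto_tsum_of_dominated_convergence
    ((summable_geometric_of_lt_one (norm_nonneg u) hu).mul_left C) (fun l => ?_) ?_
  · have hl := (differentiable_qpochNat q l).continuous
    exact (show Continuous fun d => phi21Coeff q c d e l * u ^ l by
      unfold phi21Coeff; fun_prop).tendsto d₀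
  · filter_upwards [continuous_norm.tendsto d₀ |>.eventually_lt_const (lt_add_one ‖d₀‖)] with d hd l
    rw [norm_mul, norm_pow]
    gcongr
    exact hle c d (le_max_left _ _) (hd.le.trans (le_max_right _ _)) l

lemma one_sub_mul_phi21Coeff (q c d e : ℂ) (l : ℕ) :
    (1 - d) * phi21Coeff q c (d * q) e l = phi21Coeff q c d e l * (1 - d * q ^ l) := by
  have h : (1 - d) * qpochNat q (d * q) l = qpochNat q d l * (1 - d * q ^ l) := by
    rw [← qpochNat_succ_left, qpochNat_succ]
  unfold phi21Coeff
  linear_combination qpochNat q c l / (qpochNat q q l * qpochNat q e l) * h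

lemma phi21_sub (hq : ‖q‖ < 1) (he : QRegular q e) (hu : ‖u‖ < 1) (c d : ℂ) :
    phi21 q c d e u - (1 - d) * phi21 q c (d * q) e u = d * phi21 q c d e (u * q) := by
  unfold phi21
  rw [← tsum_mul_left, ← tsum_mul_left, ← (summable_phi21 hq he hu c d).tsum_sub
    ((summable_phi21 hq he hu c (d * q)).mul_left _)]
  refine tsum_congr fun l => ?_
  rw [mul_pow]
  linear_combination -u ^ l * one_sub_mul_phi21Coeff q c d e l

lemma sum_range_phi21Coeff_contiguous (hqq : QRegular q q) (he : QRegular q e) (hbe : b * e = q)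
    (c d : ℂ) (N : ℕ) :
    ∑ l ∈ range (N + 1), ((1 - b * d) * (phi21Coeff q c d e l * q ^ l) -
        (1 - b * c * d) * (phi21Coeff q c (d * q) e l * q ^ l)) =
      -(b * d) * (qpochNat q c (N + 1) * qpochNat q (d * q) N /
        (qpochNat q q N * qpochNat q e N)) := by
  induction N with
  | zero =>
    simp only [phi21Coeff, zero_add, sum_range_one, qpochNat_succ, qpochNat_zero]
    ring
  | succ N ih =>
    have hqN := hqq.qpochNat_ne_zero N
    have heN := he.qpochNat_ne_zero N
    have hq₁ := hqq.one_sub_ne_zero N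
    have he₁ := he.one_sub_ne_zero N
    rw [sum_range_succ, ih, phi21Coeff, phi21Coeff, qpochNat_succ_left q d,
      qpochNat_succ q c (N + 1), qpochNat_succ q (d * q) N, qpochNat_succ q q N,
      qpochNat_succ q e N, pow_succ' q N]
    subst hbe
    generalize (b * e) ^ N = Q at *
    field_simp
    ring

/-- The difference of the two series telescopes; the right-hand side is its boundary term. -/
lemma phi21_contiguous (hq : ‖q‖ < 1) (he : QRegular q e) (hbe : b * e = q) (c d : ℂ) :
    (1 - b * d) * phi21 q c d e q - (1 - b * c * d) * phi21 q c (d * q) e q =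
      -(b * d) * (qinf q c * qinf q (d * q) / (qinf q q * qinf q e)) := by
  have hqq := qRegular_self hq
  have hs := (summable_phi21 hq he hq c d).mul_left (1 - b * d)
  have hs' := (summable_phi21 hq he hq c (d * q)).mul_left (1 - b * c * d)
  rw [phi21, phi21, ← tsum_mul_left, ← tsum_mul_left, ← hs.tsum_sub hs']
  refine tendsto_nhds_unique ((hs.sub hs').hasSum.tendsto_sum_nat.comp (tendsto_add_atTop_nat 1)) ?_
  refine Tendsto.congr (fun N => (sum_range_phi21Coeff_contiguous hqq he hbe c d N).symm) ?_
  exact ((((tendsto_qpochNat hq c).comp (tendsto_add_atTop_nat 1)).mul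
    (tendsto_qpochNat hq (d * q))).div ((tendsto_qpochNat hq q).mul (tendsto_qpochNat hq e))
      (mul_ne_zero (hqq.qinf_ne_zero hq) (he.qinf_ne_zero hq))).const_mul _

end Phi21

section QVandermonde

variable {q b : ℂ}

/-- The combination of two `₂φ₁` series at `q ^ (n + 1)` which the nonterminating `q`-Vandermonde
sum evaluates for `n = 0`. -/
noncomputable def qVandermondeSum (q b c d : ℂ) (n : ℕ) : ℂ :=
  qinf q (b * d) * qinf q (b * c) / qinf q b * phi21 q c d (q / b) (q ^ (n + 1)) +
    qinf q c * qinf q d / qinf q b⁻¹ *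
      (phi21 q (b * c) (b * d) (b * q) (q ^ (n + 1)) * b ^ n)

lemma qVandermondeSum_comm (q b c d : ℂ) (n : ℕ) :
    qVandermondeSum q b c d n = qVandermondeSum q b d c n := by
  rw [qVandermondeSum, qVandermondeSum, phi21_comm q c d, phi21_comm q (b * c),
    mul_comm (qinf q (b * d)), mul_comm (qinf q c)]

lemma QRegular.base_div (hb : QRegular q b⁻¹) : QRegular q (q / b) := by
  simpa only [div_eq_inv_mul] using hb.mul_base

lemma qinf_mul_qinf_self_div (hq : ‖q‖ < 1) (hb : b ≠ 0) :
    qinf q b * qinf q (q / b) = -b * (qinf q b⁻¹ * qinf q (b * q)) := by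
  rw [qinf_eq_one_sub_mul hq b, qinf_eq_one_sub_mul hq b⁻¹, ← div_eq_inv_mul]
  linear_combination -(qinf q (b * q) * qinf q (q / b)) * mul_inv_cancel₀ hb

lemma norm_pow_succ_lt_one (hq : ‖q‖ < 1) (n : ℕ) : ‖q ^ (n + 1)‖ < 1 := by
  rw [norm_pow]
  exact pow_lt_one₀ (norm_nonneg q) hq n.succ_ne_zero

lemma qVandermondeSum_sub (hq : ‖q‖ < 1) (hb : QRegular q b) (hb' : QRegular q b⁻¹) (c d : ℂ)
    (n : ℕ) :
    qVandermondeSum q b c d n - (1 - d) * (1 - b * d) * qVandermondeSum q b c (d * q) n =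
      d * qVandermondeSum q b c d (n + 1) := by
  have h₁ := phi21_sub hq hb'.base_div (norm_pow_succ_lt_one hq n) c d
  have h₂ := phi21_sub hq hb.mul_base (norm_pow_succ_lt_one hq n) (b * c) (b * d)
  rw [← pow_succ] at h₁ h₂
  unfold qVandermondeSum
  rw [← mul_assoc b d q, pow_succ b n]
  linear_combination qinf q (b * d) * qinf q (b * c) / qinf q b * h₁ +
    qinf q c * qinf q d / qinf q b⁻¹ * b ^ n * h₂ +
    (1 - d) * qinf q (b * c) / qinf q b * phi21 q c (d * q) (q / b) (q ^ (n + 1)) *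
      qinf_eq_one_sub_mul hq (b * d) +
    (1 - b * d) * qinf q c / qinf q b⁻¹ * b ^ n *
      phi21 q (b * c) (b * d * q) (b * q) (q ^ (n + 1)) * qinf_eq_one_sub_mul hq d

lemma qVandermondeSum_zero_step (hq : ‖q‖ < 1) (hb0 : b ≠ 0) (hb : QRegular q b)
    (hb' : QRegular q b⁻¹) (c d : ℂ) :
    qVandermondeSum q b c d 0 = (1 - b * c * d) * qVandermondeSum q b c (d * q) 0 := by
  have h₁ := phi21_contiguous hq hb'.base_div (mul_div_cancel₀ q hb0) c d
  have h₂ := phi21_contiguous hq hb.mul_base (inv_mul_cancel_left₀ hb0 q) (b * c) (b * d)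
  rw [inv_mul_cancel_left₀ hb0, inv_mul_cancel_left₀ hb0] at h₂
  have hreflect : b / (qinf q b * qinf q (q / b)) = -1 / (qinf q b⁻¹ * qinf q (b * q)) := by
    rw [qinf_mul_qinf_self_div hq hb0, div_mul_eq_div_div, div_neg, div_self hb0]
  simp only [qVandermondeSum, zero_add, pow_one, pow_zero, mul_one]
  rw [qinf_eq_one_sub_mul hq (b * d), qinf_eq_one_sub_mul hq d, ← mul_assoc b d q]
  linear_combination qinf q (b * d * q) * qinf q (b * c) / qinf q b * h₁ +
    qinf q c * qinf q (d * q) / qinf q b⁻¹ * h₂ -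
    d * qinf q c * qinf q (d * q) * qinf q (b * c) * qinf q (b * d * q) / qinf q q * hreflect

lemma continuous_qVandermondeSum (hq : ‖q‖ < 1) (hb : QRegular q b) (hb' : QRegular q b⁻¹)
    (c : ℂ) (n : ℕ) : Continuous fun d => qVandermondeSum q b c d n := by
  have h₁ := continuous_phi21 hq hb'.base_div (norm_pow_succ_lt_one hq n) c
  have h₂ : Continuous fun d => phi21 q (b * c) (b * d) (b * q) (q ^ (n + 1)) :=
    (continuous_phi21 hq hb.mul_base (norm_pow_succ_lt_one hq n) (b * c)).comp
      (continuous_const_mul b)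
  have hinf := (differentiable_qinf hq).continuous
  unfold qVandermondeSum
  fun_prop

lemma qVandermondeSum_zero_eq_mul (hq : ‖q‖ < 1) (hb0 : b ≠ 0) (hb : QRegular q b)
    (hb' : QRegular q b⁻¹) (c d : ℂ) :
    qVandermondeSum q b c d 0 = qinf q (b * c * d) * qVandermondeSum q b c 0 0 := by
  have hiter (k : ℕ) : qVandermondeSum q b c d 0 =
      qpochNat q (b * c * d) k * qVandermondeSum q b c (d * q ^ k) 0 := by
    induction k with
    | zero => simp
    | succ k ih =>
      rw [ih, qVandermondeSum_zero_step hq hb0 hb hb', qpochNat_succ, pow_succ, mul_assoc d,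
        ← mul_assoc (b * c) d, mul_assoc (qpochNat q (b * c * d) k)]
  have hpow : Tendsto (fun k : ℕ => d * q ^ k) atTop (𝓝 0) := by
    simpa using (tendsto_pow_atTop_nhds_zero_of_norm_lt_one hq).const_mul d
  have hlim := (tendsto_qpochNat hq (b * c * d)).mul
    (((continuous_qVandermondeSum hq hb hb' c 0).tendsto 0).comp hpow)
  exact tendsto_nhds_unique tendsto_const_nhds (hlim.congr fun k => (hiter k).symm)

lemma phi21_one_left (q d e u : ℂ) : phi21 q 1 d e u = 1 := by
  rw [phi21, tsum_eq_single 0]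
  · simp [phi21Coeff]
  · intro l hl
    obtain ⟨m, rfl⟩ := Nat.exists_eq_succ_of_ne_zero hl
    simp [phi21Coeff, qpochNat_succ_left]

theorem qVandermondeSum_zero (hq : ‖q‖ < 1) (hb0 : b ≠ 0) (hb : QRegular q b)
    (hb' : QRegular q b⁻¹) (c d : ℂ) : qVandermondeSum q b c d 0 = qinf q (b * c * d) := by
  have hconst (c : ℂ) : qVandermondeSum q b c 0 0 = qVandermondeSum q b 0 0 0 := by
    rw [qVandermondeSum_comm, qVandermondeSum_zero_eq_mul hq hb0 hb hb', mul_zero, zero_mul,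
      qinf_zero, one_mul]
  have hone : qVandermondeSum q b 1 0 0 = 1 := by
    rw [qVandermondeSum, phi21_one_left, qinf_one hq, mul_zero, qinf_zero, mul_one b, one_mul,
      mul_one, div_self (hb.qinf_ne_zero hq), zero_mul, zero_div, zero_mul, add_zero]
  rw [qVandermondeSum_zero_eq_mul hq hb0 hb hb', hconst c, ← hconst 1, hone, mul_one]

theorem qVandermondeSum_eq (hq : ‖q‖ < 1) (hq0 : q ≠ 0) (hb0 : b ≠ 0) (hb : QRegular q b)
    (hb' : QRegular q b⁻¹) (c : ℂ) {d : ℂ} (hd : d ≠ 0) (n : ℕ) :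
    qVandermondeSum q b c d n =
      qpochNat q q n * qinf q (b * c * d * q ^ n) *
        qRatioProdCoeff q (b * c) (b * d) 1 b n := by
  induction n generalizing d with
  | zero => simp [qVandermondeSum_zero hq hb0 hb hb']
  | succ n ih =>
    apply mul_left_cancel₀ hd
    have hrec := qRatioProdCoeff_succ_balanced (qRegular_self hq) (b * c) d 1 b n
    have hinf := qinf_eq_one_sub_mul hq (b * c * d * q ^ n)
    rw [mul_assoc (b * c * d), ← pow_succ] at hinf
    simp only [one_mul] at hrec
    rw [← qVandermondeSum_sub hq hb hb', ih hd, ih (mul_ne_zero hd hq0), hinf, qpochNat_succ,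
      ← pow_succ', ← mul_assoc (b * c) d q, mul_assoc (b * c * d) q, ← pow_succ']
    linear_combination -(qinf q (b * c * d * q ^ (n + 1)) * qpochNat q q n) * hrec

end QVandermonde

/-! ### Regularised `₄φ₃` series -/

section RegPhi43

variable {q x y z w a b c d e A B γ : ℂ}

/-- The product `(A;q)_∞ (B;q)_∞ ₄φ₃[a, b, c, d; A, B, e; q, q]`, with the two infinite products
absorbed into the terms so that it is entire in `a`, `b`, `A` and `B`. -/
noncomputable def regPhi43 (q a b c d A B e : ℂ) : ℂ :=
  ∑' l, phi21Coeff q c d e l * q ^ l *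
    (qpochNat q a l * qpochNat q b l * (qinf q (A * q ^ l) * qinf q (B * q ^ l)))

lemma summable_qRatioProdCoeff_mul_phi21Coeff (hq : ‖q‖ < 1) (he : QRegular q e)
    (hx : ‖x * w‖ < 1) (hy : ‖y * w‖ < 1) (A B c d : ℂ) :
    Summable fun p : ℕ × ℕ =>
      qRatioProdCoeff q A B x y p.1 * w ^ p.1 *
        (phi21Coeff q c d e p.2 * (q ^ (p.1 + 1)) ^ p.2) := by
  obtain ⟨C, hC, hle⟩ := exists_norm_phi21Coeff_le hq he (max ‖c‖ ‖d‖)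
  have hprod := (summable_norm_qRatioProdCoeff_mul_pow hq A B hx hy).mul_of_nonneg
    ((summable_geometric_of_lt_one (norm_nonneg q) hq).mul_left C) (fun _ => norm_nonneg _)
    fun _ => by positivity
  refine Summable.of_norm_bounded hprod fun ⟨n, l⟩ => ?_
  have hpow : ‖(q ^ (n + 1)) ^ l‖ ≤ ‖q‖ ^ l := by
    rw [norm_pow, norm_pow]
    gcongr
    exact pow_le_of_le_one (norm_nonneg q) hq.le n.succ_ne_zero
  rw [norm_mul, norm_mul (phi21Coeff q c d e l)]
  gcongr
  exact hle c d (le_max_left _ _) (le_max_right _ _) l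

lemma summable_qRatioProdCoeff_mul_phi21 (hq : ‖q‖ < 1) (he : QRegular q e)
    (hx : ‖x * w‖ < 1) (hy : ‖y * w‖ < 1) (A B c d : ℂ) :
    Summable fun n => qRatioProdCoeff q A B x y n * w ^ n * phi21 q c d e (q ^ (n + 1)) := by
  simpa only [phi21, tsum_mul_left] using
    (summable_qRatioProdCoeff_mul_phi21Coeff hq he hx hy A B c d).prod

lemma tsum_qRatioProdCoeff_mul_phi21 (hq : ‖q‖ < 1) (he : QRegular q e) (hx : ‖x * w‖ < 1)
    (hy : ‖y * w‖ < 1) (A B c d : ℂ) :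
    qinf q (x * w) * qinf q (y * w) *
        ∑' n, qRatioProdCoeff q A B x y n * w ^ n * phi21 q c d e (q ^ (n + 1)) =
      regPhi43 q (x * w) (y * w) c d (A * w) (B * w) e := by
  have hdouble : Summable (Function.uncurry fun n l => qRatioProdCoeff q A B x y n * w ^ n *
    (phi21Coeff q c d e l * (q ^ (n + 1)) ^ l)) :=
    summable_qRatioProdCoeff_mul_phi21Coeff hq he hx hy A B c d
  have hcol (l : ℕ) :
      ∑' n, qRatioProdCoeff q A B x y n * w ^ n * (phi21Coeff q c d e l * (q ^ (n + 1)) ^ l) =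
        phi21Coeff q c d e l * q ^ l * ∑' n, qRatioProdCoeff q A B x y n * (w * q ^ l) ^ n := by
    rw [← tsum_mul_left]
    exact tsum_congr fun n => by ring
  have hrow (n : ℕ) : qRatioProdCoeff q A B x y n * w ^ n * phi21 q c d e (q ^ (n + 1)) =
      ∑' l, qRatioProdCoeff q A B x y n * w ^ n * (phi21Coeff q c d e l * (q ^ (n + 1)) ^ l) := by
    rw [phi21, tsum_mul_left]
  rw [tsum_congr hrow, ← hdouble.tsum_comm, ← tsum_mul_left, regPhi43]
  refine tsum_congr fun l => ?_
  have hxl := norm_mul_pow_lt_one hq.le hx l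
  have hyl := norm_mul_pow_lt_one hq.le hy l
  have hx0 := qinf_ne_zero_of_norm_lt_one hq hxl
  have hy0 := qinf_ne_zero_of_norm_lt_one hq hyl
  rw [mul_assoc] at hxl hyl
  rw [hcol, tsum_qRatioProdCoeff_mul_pow hq A B hxl hyl, qinf_eq_qpochNat_mul hq (x * w) l,
    qinf_eq_qpochNat_mul hq (y * w) l]
  simp only [← mul_assoc] at hx0 hy0 ⊢
  generalize qinf q (x * w * q ^ l) = X at hx0 ⊢
  generalize qinf q (y * w * q ^ l) = Y at hy0 ⊢
  field_simp

/-- The combination of two regularised `₄φ₃` series into which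
`∑ n, qRatioProdCoeff q A B x y n * qVandermondeSum q b c d n` splits. -/
noncomputable def regPhi43Pair (q x y A B b c d : ℂ) : ℂ :=
  qinf q (b * d) * qinf q (b * c) / qinf q b * (qinf q (x * b) * qinf q (y * b)) *
      regPhi43 q x y c d A B (q / b) +
    qinf q c * qinf q d / qinf q b⁻¹ * (qinf q x * qinf q y) *
      regPhi43 q (x * b) (y * b) (b * c) (b * d) (A * b) (B * b) (b * q)

lemma tsum_qRatioProdCoeff_mul_qVandermondeSum (hq : ‖q‖ < 1) (hb : QRegular q b)
    (hb' : QRegular q b⁻¹) (hx : ‖x‖ < 1) (hy : ‖y‖ < 1) (hxb : ‖x * b‖ < 1) (hyb : ‖y * b‖ < 1)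
    (A B c d : ℂ) :
    qinf q x * qinf q y * (qinf q (x * b) * qinf q (y * b)) *
        ∑' n, qRatioProdCoeff q A B x y n * qVandermondeSum q b c d n =
      regPhi43Pair q x y A B b c d := by
  rw [← mul_one x] at hx
  rw [← mul_one y] at hy
  have hs₁ := summable_qRatioProdCoeff_mul_phi21 hq hb'.base_div hx hy A B c d
  have ht₁ := tsum_qRatioProdCoeff_mul_phi21 hq hb'.base_div hx hy A B c d
  have hs₂ := summable_qRatioProdCoeff_mul_phi21 hq hb.mul_base hxb hyb A B (b * c) (b * d)
  have ht₂ := tsum_qRatioProdCoeff_mul_phi21 hq hb.mul_base hxb hyb A B (b * c) (b * d)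
  simp only [mul_one, one_pow] at hs₁ ht₁
  have hsplit (n : ℕ) : qRatioProdCoeff q A B x y n * qVandermondeSum q b c d n =
      qinf q (b * d) * qinf q (b * c) / qinf q b *
          (qRatioProdCoeff q A B x y n * phi21 q c d (q / b) (q ^ (n + 1))) +
        qinf q c * qinf q d / qinf q b⁻¹ *
          (qRatioProdCoeff q A B x y n * b ^ n *
            phi21 q (b * c) (b * d) (b * q) (q ^ (n + 1))) := by
    rw [qVandermondeSum]
    ring
  rw [tsum_congr hsplit, (hs₁.mul_left _).tsum_add (hs₂.mul_left _), tsum_mul_left,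
    tsum_mul_left, regPhi43Pair, ← ht₁, ← ht₂]
  ring

lemma kernelSum_eq_tsum_qVandermondeSum (hq : ‖q‖ < 1) (hq0 : q ≠ 0) (hγ : γ ≠ 0) (hb0 : b ≠ 0)
    (hb : QRegular q b) (hb' : QRegular q b⁻¹) (x y A z : ℂ) :
    kernelSum q x y A γ b z = ∑' n, qRatioProdCoeff q A (x * y * z) x y n *
      qVandermondeSum q b (A * z / γ) (γ / b) n := by
  refine tsum_congr fun n => ?_
  have hA : b * (A * z / γ) * (γ / b) = A * z := by field_simp
  rw [qVandermondeSum_eq hq hq0 hb0 hb hb' _ (div_ne_zero hγ hb0), hA, mul_div_cancel₀ _ hb0,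
    qRatioProdCoeff_swap_num (qRegular_self hq) (b * (A * z / γ)), mul_div_assoc', mul_comm b]
  ring

lemma kernelSum_mul_eq_of_norm_lt_one (hq : ‖q‖ < 1) (hq0 : q ≠ 0) (hγ : γ ≠ 0) (hb0 : b ≠ 0)
    (hb : QRegular q b) (hb' : QRegular q b⁻¹) (A : ℂ) (hx : ‖x‖ < 1) (hy : ‖y‖ < 1)
    (hxz : ‖x * z‖ < 1) (hyz : ‖y * z‖ < 1) (hxb : ‖x * b‖ < 1) (hyb : ‖y * b‖ < 1) :
    qinf q x * qinf q y * (qinf q (x * z) * qinf q (y * z)) * kernelSum q x y A γ z b =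
      regPhi43Pair q x y A (x * y * z) b (A * z / γ) (γ / b) := by
  rw [← tsum_qRatioProdCoeff_mul_qVandermondeSum hq hb hb' hx hy hxb hyb,
    ← kernelSum_eq_tsum_qVandermondeSum hq hq0 hγ hb0 hb hb', mul_assoc,
    kernelSum_swap hq A γ hx hy hxz hyz hxb hyb, mul_assoc (qinf q x * qinf q y)]

end RegPhi43

/-! ### Analytic continuation in `(x, y)` -/

section Continuation

variable {q x y z b c d e γ : ℂ}

lemma norm_mul_pow_le (hq : ‖q‖ < 1) (a : ℂ) (n : ℕ) : ‖a * q ^ n‖ ≤ ‖a‖ := by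
  rw [norm_mul, norm_pow]
  exact mul_le_of_le_one_right (norm_nonneg a) (pow_le_one₀ (norm_nonneg q) hq.le)

lemma exists_norm_regPhi43_term_le (hq : ‖q‖ < 1) (he : QRegular q e) (c d : ℂ) (R : ℝ) :
    ∃ C : ℝ, ∀ a b A B : ℂ, ‖a‖ ≤ R → ‖b‖ ≤ R → ‖A‖ ≤ R → ‖B‖ ≤ R → ∀ l : ℕ,
      ‖phi21Coeff q c d e l * q ^ l *
        (qpochNat q a l * qpochNat q b l * (qinf q (A * q ^ l) * qinf q (B * q ^ l)))‖ ≤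
      C * ‖q‖ ^ l := by
  obtain ⟨C, hC, hle⟩ := exists_norm_phi21Coeff_le hq he (max ‖c‖ ‖d‖)
  let E : ℝ := Real.exp (R / (1 - ‖q‖))
  refine ⟨C * (E * E * (E * E)), fun a b A B ha hb hA hB l => ?_⟩
  calc _ ≤ C * ‖q‖ ^ l * (E * E * (E * E)) := by
        simp only [norm_mul, norm_pow]
        gcongr
        · exact hle c d (le_max_left _ _) (le_max_right _ _) l
        · exact norm_qpochNat_le hq ha l
        · exact norm_qpochNat_le hq hb l
        · exact norm_qinf_le hq ((norm_mul_pow_le hq A l).trans hA)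
        · exact norm_qinf_le hq ((norm_mul_pow_le hq B l).trans hB)
    _ = _ := by ring

lemma differentiable_regPhi43 (hq : ‖q‖ < 1) (he : QRegular q e) (c d : ℂ) {f g F G : ℂ → ℂ}
    (hf : Differentiable ℂ f) (hg : Differentiable ℂ g) (hF : Differentiable ℂ F)
    (hG : Differentiable ℂ G) :
    Differentiable ℂ fun s => regPhi43 q (f s) (g s) c d (F s) (G s) e := fun s₀ => by
  let N (s : ℂ) : ℝ := max (max ‖f s‖ ‖g s‖) (max ‖F s‖ ‖G s‖)
  have hN : Continuous N := (hf.continuous.norm.max hg.continuous.norm).max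
    (hF.continuous.norm.max hG.continuous.norm)
  have hU : IsOpen {s | N s < N s₀ + 1} := isOpen_lt hN continuous_const
  obtain ⟨C, hle⟩ := exists_norm_regPhi43_term_le hq he c d (N s₀ + 1)
  refine (Complex.differentiableOn_tsum_of_summable_norm
    ((summable_geometric_of_lt_one (norm_nonneg q) hq).mul_left C) (fun l => ?_) hU
    fun l s hs => ?_).differentiableAt (hU.mem_nhds (show N s₀ < N s₀ + 1 from lt_add_one _))
  · have hp := differentiable_qpochNat q l
    have hi := differentiable_qinf hq
    exact ((((hp.comp hf).mul (hp.comp hg)).mul ((hi.comp (hF.mul_const _)).mul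
      (hi.comp (hG.mul_const _)))).const_mul _).differentiableOn
  · have hs' : N s ≤ N s₀ + 1 := le_of_lt hs
    simp only [N, max_le_iff] at hs'
    exact hle _ _ _ _ hs'.1.1 hs'.1.2 hs'.2.1 hs'.2.2 l

lemma differentiable_qinf_mul_mul (hq : ‖q‖ < 1) (x w : ℂ) :
    Differentiable ℂ fun s => qinf q (s * x * w) :=
  (differentiable_qinf hq).comp (by fun_prop)

lemma differentiable_regPhi43Pair (hq : ‖q‖ < 1) (hb : QRegular q b) (hb' : QRegular q b⁻¹)
    (x y z A c d : ℂ) :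
    Differentiable ℂ fun s => regPhi43Pair q (s * x) (s * y) A (s * x * (s * y) * z) b c d := by
  have hpair₁ : Differentiable ℂ fun s =>
      regPhi43 q (s * x) (s * y) c d A (s * x * (s * y) * z) (q / b) :=
    differentiable_regPhi43 hq hb'.base_div c d (by fun_prop) (by fun_prop) (by fun_prop)
      (by fun_prop)
  have hpair₂ : Differentiable ℂ fun s => regPhi43 q (s * x * b) (s * y * b) (b * c) (b * d)
      (A * b) (s * x * (s * y) * z * b) (b * q) :=
    differentiable_regPhi43 hq hb.mul_base (b * c) (b * d) (by fun_prop) (by fun_prop)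
      (by fun_prop) (by fun_prop)
  have hx := differentiable_qinf_mul_mul hq x 1
  have hy := differentiable_qinf_mul_mul hq y 1
  have hxb := differentiable_qinf_mul_mul hq x b
  have hyb := differentiable_qinf_mul_mul hq y b
  simp only [mul_one] at hx hy
  unfold regPhi43Pair
  fun_prop

lemma differentiable_qRatioProdCoeff (q a : ℂ) {f g h : ℂ → ℂ} (hf : Differentiable ℂ f)
    (hg : Differentiable ℂ g) (hh : Differentiable ℂ h) (n : ℕ) :
    Differentiable ℂ fun s => qRatioProdCoeff q a (f s) (g s) (h s) n := by
  simp only [qRatioProdCoeff_eq_sum, qRatioCoeff]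
  fun_prop

lemma differentiableOn_kernelSum {R r : ℝ} (hq : ‖q‖ < 1) (A γ b : ℂ) (hR : 0 ≤ R)
    (hRr : R * max ‖x‖ ‖y‖ < r) (hr : ‖(r : ℂ)‖ < 1) (hrz : ‖z * r‖ < 1) :
    DifferentiableOn ℂ (fun s => kernelSum q (s * x) (s * y) A γ z b) (Metric.ball 0 R) := by
  have hr0 : 0 < r := (by positivity : 0 ≤ R * max ‖x‖ ‖y‖).trans_lt hRr
  obtain ⟨C, -, hle⟩ := exists_norm_qRatioProdCoeff_le_mul_pow (𝕜 := ℂ) hq ‖A‖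
    (R * ‖x‖ * (R * ‖y‖) * ‖b‖) (by positivity) hRr
  have hsum := summable_norm_qRatioProdCoeff_mul_pow hq γ (A * b * z / γ)
    (by rwa [one_mul]) hrz
  refine Complex.differentiableOn_tsum_of_summable_norm (hsum.mul_left
    (Real.exp (‖q‖ / (1 - ‖q‖)) * Real.exp (‖A * b‖ / (1 - ‖q‖)) * C)) (fun n => ?_)
    Metric.isOpen_ball fun n s hs => ?_
  · have hcoeff := differentiable_qRatioProdCoeff q A (f := fun s => s * x * (s * y) * b)
      (g := fun s => s * x) (h := fun s => s * y) (by fun_prop) (by fun_prop) (by fun_prop) n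
    exact ((hcoeff.const_mul _).mul_const _).differentiableOn
  · have hs' : ‖s‖ ≤ R := (mem_ball_zero_iff.mp hs).le
    have hcoeff : ‖qRatioProdCoeff q A (s * x * (s * y) * b) (s * x) (s * y) n‖ ≤ C * r ^ n := by
      refine hle _ _ _ _ le_rfl ?_ ?_ ?_ n <;> simp only [norm_mul] <;> gcongr
      exacts [le_max_left _ _, le_max_right _ _]
    have hinf := norm_qinf_le hq (norm_mul_pow_le hq (A * b) n)
    rw [norm_mul, norm_mul, norm_mul, norm_mul _ ((r : ℂ) ^ n), norm_pow,
      Complex.norm_of_nonneg hr0.le]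
    calc _ ≤ Real.exp (‖q‖ / (1 - ‖q‖)) * Real.exp (‖A * b‖ / (1 - ‖q‖)) * (C * r ^ n) *
          ‖qRatioProdCoeff q γ (A * b * z / γ) 1 z n‖ := by
          gcongr
          exact norm_qpochNat_le hq le_rfl n
      _ = _ := by ring

lemma exists_differentiableOn_kernelSum (hq : ‖q‖ < 1) (A γ b : ℂ) (hx : ‖x‖ < 1) (hy : ‖y‖ < 1)
    (hxz : ‖x * z‖ < 1) (hyz : ‖y * z‖ < 1) : ∃ R : ℝ, 1 < R ∧
      DifferentiableOn ℂ (fun s => kernelSum q (s * x) (s * y) A γ z b) (Metric.ball 0 R) := by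
  obtain ⟨r, hxr, hyr, hr⟩ := exists_forall_mul_norm_lt_one {1, z} (by
    simpa only [mem_insert, mem_singleton, forall_eq_or_imp, forall_eq, mul_one]
      using ⟨⟨hx, hy⟩, hxz, hyz⟩)
  have hr0 : 0 < r := (norm_nonneg x).trans_lt hxr
  obtain ⟨R, hR, hRr⟩ := exists_gt_mul_lt_one (m := 1) (w := max ‖x‖ ‖y‖ / r)
    (by rw [one_mul, div_lt_one hr0]; exact max_lt hxr hyr)
  rw [mul_div_assoc', div_lt_one hr0] at hRr
  have hwr (w : ℂ) (hw : w ∈ ({1, z} : Finset ℂ)) : ‖w * (r : ℂ)‖ < 1 := by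
    rw [mul_comm, norm_mul, Complex.norm_of_nonneg hr0.le]
    exact hr w hw
  exact ⟨R, hR, differentiableOn_kernelSum hq A γ b (zero_le_one.trans hR.le) hRr
    (by simpa only [one_mul] using hwr 1 (by simp)) (hwr z (by simp))⟩

lemma eventually_norm_mul_mul_lt_one (x w : ℂ) : ∀ᶠ s : ℂ in 𝓝 0, ‖s * x * w‖ < 1 := by
  have hcont : Continuous fun s : ℂ => ‖s * x * w‖ := by fun_prop
  exact (hcont.tendsto 0).eventually_lt_const (by simp)

theorem kernelSum_mul_eq_regPhi43Pair (hq : ‖q‖ < 1) (hq0 : q ≠ 0) (hγ : γ ≠ 0) (hb0 : b ≠ 0)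
    (hb : QRegular q b) (hb' : QRegular q b⁻¹) (A : ℂ) (hx : ‖x‖ < 1) (hy : ‖y‖ < 1)
    (hxz : ‖x * z‖ < 1) (hyz : ‖y * z‖ < 1) :
    qinf q x * qinf q y * (qinf q (x * z) * qinf q (y * z)) * kernelSum q x y A γ z b =
      regPhi43Pair q x y A (x * y * z) b (A * z / γ) (γ / b) := by
  obtain ⟨R, hR, hkernel⟩ := exists_differentiableOn_kernelSum hq A γ b hx hy hxz hyz
  let lhs (s : ℂ) : ℂ := qinf q (s * x * 1) * qinf q (s * y * 1) *
    (qinf q (s * x * z) * qinf q (s * y * z)) * kernelSum q (s * x) (s * y) A γ z b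
  let rhs (s : ℂ) : ℂ :=
    regPhi43Pair q (s * x) (s * y) A (s * x * (s * y) * z) b (A * z / γ) (γ / b)
  have hlhs : DifferentiableOn ℂ lhs (Metric.ball 0 R) :=
    (((differentiable_qinf_mul_mul hq x 1).mul (differentiable_qinf_mul_mul hq y 1)).mul
      ((differentiable_qinf_mul_mul hq x z).mul
        (differentiable_qinf_mul_mul hq y z))).differentiableOn.mul hkernel
  have hrhs : DifferentiableOn ℂ rhs (Metric.ball 0 R) :=
    (differentiable_regPhi43Pair hq hb hb' x y z A (A * z / γ) (γ / b)).differentiableOn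
  have hnear : lhs =ᶠ[𝓝 0] rhs := by
    filter_upwards [eventually_norm_mul_mul_lt_one x 1, eventually_norm_mul_mul_lt_one y 1,
      eventually_norm_mul_mul_lt_one x z, eventually_norm_mul_mul_lt_one y z,
      eventually_norm_mul_mul_lt_one x b, eventually_norm_mul_mul_lt_one y b]
      with s hsx hsy hsxz hsyz hsxb hsyb
    simp only [lhs, mul_one] at hsx hsy ⊢
    exact kernelSum_mul_eq_of_norm_lt_one hq hq0 hγ hb0 hb hb' A hsx hsy hsxz hsyz hsxb hsyb
  have hball := (hlhs.analyticOnNhd Metric.isOpen_ball).eqOn_of_preconnected_of_eventuallyEq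
    (hrhs.analyticOnNhd Metric.isOpen_ball) (convex_ball (0 : ℂ) R).isPreconnected
    (Metric.mem_ball_self (zero_lt_one.trans hR)) hnear
  have hone : lhs 1 = rhs 1 := hball (by simpa using hR)
  simpa only [lhs, rhs, one_mul, mul_one] using hone

end Continuation

/-! ### Evaluation of the triple series -/

section Evaluation

variable {q α β γ x y z : ℂ}

lemma Phi43_swap_three_four (q a₁ a₂ a₃ a₄ b₁ b₂ b₃ u : ℂ) :
    Phi43 q a₁ a₂ a₃ a₄ b₁ b₂ b₃ u = Phi43 q a₁ a₂ a₄ a₃ b₁ b₂ b₃ u :=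
  tsum_congr fun ℓ => by ring

lemma Phi43_swap_two_four (q a₁ a₂ a₃ a₄ b₁ b₂ b₃ u : ℂ) :
    Phi43 q a₁ a₂ a₃ a₄ b₁ b₂ b₃ u = Phi43 q a₁ a₄ a₃ a₂ b₁ b₂ b₃ u :=
  tsum_congr fun ℓ => by ring

lemma regPhi43_eq_mul_Phi43 {A B : ℂ} (hq : ‖q‖ < 1) (hA : QRegular q A) (hB : QRegular q B)
    (a b c d e : ℂ) :
    regPhi43 q a b c d A B e = qinf q A * qinf q B * Phi43 q a b c d A B e q := by
  rw [regPhi43, Phi43, ← tsum_mul_left]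
  refine tsum_congr fun l => ?_
  have hA0 := hA.qpochNat_ne_zero l
  have hB0 := hB.qpochNat_ne_zero l
  simp only [qpoch_natCast, phi21Coeff]
  rw [qinf_eq_qpochNat_mul hq A l, qinf_eq_qpochNat_mul hq B l]
  generalize qpochNat q A l = P at hA0 ⊢
  generalize qpochNat q B l = Q at hB0 ⊢
  simp only [div_eq_mul_inv, mul_inv]
  field_simp

lemma regPhi43Pair_eq_Phi43 (hq : ‖q‖ < 1) (hβ : β ≠ 0) (hγ : γ ≠ 0) (hx : x ≠ 0)
    (hαβ : QRegular q (α * β)) (hβyz : QRegular q (β * y * z)) (hαx : QRegular q (α * x))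
    (hxyz : QRegular q (x * y * z)) :
    regPhi43Pair q x y (α * x) (x * y * z) (β / x) (α * x * z / γ) (γ / (β / x)) =
      qinf q γ * qinf q (α * β * z / γ) / qinf q (β / x) * (qinf q β * qinf q (β * y / x)) *
        (qinf q (α * x) * qinf q (x * y * z) *
          Phi43 q x y (γ * x / β) (α * x * z / γ) (α * x) (x * y * z) (q * x / β) q) +
      qinf q (α * x * z / γ) * qinf q (γ * x / β) / qinf q (x / β) * (qinf q x * qinf q y) *
        (qinf q (α * β) * qinf q (β * y * z) *
          Phi43 q β γ (α * β * z / γ) (β * y / x) (α * β) (β * y * z) (q * β / x) q) := by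
  have hbd : β / x * (γ / (β / x)) = γ := by field_simp
  have hbc : β / x * (α * x * z / γ) = α * β * z / γ := by field_simp
  have hxb : x * (β / x) = β := by field_simp
  have hyb : y * (β / x) = β * y / x := by ring
  have hAb : α * x * (β / x) = α * β := by field_simp
  have hBb : x * y * z * (β / x) = β * y * z := by field_simp
  have hqb : β / x * q = q * β / x := by ring
  rw [regPhi43Pair, hbd, hbc, hxb, hyb, hAb, hBb, hqb, inv_div, div_div_eq_mul_div,
    div_div_eq_mul_div, regPhi43_eq_mul_Phi43 hq hαx hxyz, regPhi43_eq_mul_Phi43 hq hαβ hβyz,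
    Phi43_swap_three_four q x y, Phi43_swap_two_four q β γ]

lemma qRegular_of_forall_ne_zpow {u : ℂ} (h : ∀ n : ℕ, u ≠ q ^ (-(n : ℤ))) : QRegular q u :=
  fun n hn => h n <| by
    rw [zpow_neg, zpow_natCast]
    exact eq_inv_of_mul_eq_one_left hn

lemma qRegular_div_of_forall_ne_pow (hγ : γ ≠ 0) (h : ∀ n : ℕ, 1 ≤ n → γ ≠ q ^ n) :
    QRegular q (q / γ) :=
  fun n hn => h (n + 1) n.succ_pos <| by
    rw [pow_succ']
    field_simp at hn
    exact hn.symm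

lemma QRegular.mul_zpow_ne_one {u : ℂ} (hu : QRegular q u) (hq0 : q ≠ 0)
    (h : ∀ n : ℕ, 1 ≤ n → u ≠ q ^ n) (N : ℤ) : u * q ^ N ≠ 1 := by
  obtain ⟨n, rfl | rfl⟩ := N.eq_nat_or_neg
  · rw [zpow_natCast]
    exact hu n
  · rcases n.eq_zero_or_pos with rfl | hn
    · simpa using hu 0
    · rw [zpow_neg, zpow_natCast]
      exact fun hone => h n hn ((mul_inv_eq_one₀ (pow_ne_zero n hq0)).mp hone)

theorem tsum_qGGRTerm_eq (hq : ‖q‖ < 1) (hq0 : q ≠ 0) (hβ : β ≠ 0) (hγ : γ ≠ 0) (hx : x ≠ 0)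
    (hs : Summable (qGGRTerm q α β γ x y z)) (hγq : QRegular q (q / γ))
    (hαβ : ∀ N : ℤ, α * β * q ^ N ≠ 1) (hx1 : ‖x‖ < 1) (hy1 : ‖y‖ < 1) (hxz : ‖x * z‖ < 1)
    (hyz : ‖y * z‖ < 1) (hαβz : ‖α * β * z / γ‖ < 1) (hxβ : QRegular q (x / β))
    (hβx : QRegular q (β / x)) (hβyz : QRegular q (β * y * z)) (hαx : QRegular q (α * x))
    (hxyz : QRegular q (x * y * z)) :
    ∑' p, qGGRTerm q α β γ x y z p =
      qinf q (γ * x / β) * qinf q (q * z / γ) * qinf q (α * x * z / γ) * qinf q (β * y * z) /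
          (qinf q (x / β) * qinf q (α * β * z / γ) * qinf q (x * z) * qinf q (y * z)) *
          Phi43 q β γ (α * β * z / γ) (β * y / x) (α * β) (β * y * z) (q * β / x) q +
        qinf q (q * z / γ) * qinf q β * qinf q γ * qinf q (β * y / x) * qinf q (α * x) *
            qinf q (x * y * z) /
          (qinf q x * qinf q y * qinf q (x * z) * qinf q (y * z) * qinf q (α * β) *
            qinf q (β / x)) *
          Phi43 q x y (γ * x / β) (α * x * z / γ) (α * x) (x * y * z) (q * x / β) q := by
  have hαβ' : QRegular q (α * β) := fun n => by simpa only [zpow_natCast] using hαβ n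
  have htriple := tsum_qGGRTerm_mul hq hq0 hγ hγq hαβ hαβz hx hs
  have hkernel := kernelSum_mul_eq_regPhi43Pair hq hq0 hγ (div_ne_zero hβ hx) hβx
    (by rwa [inv_div]) (α * x) hx1 hy1 hxz hyz
  rw [regPhi43Pair_eq_Phi43 hq hβ hγ hx hαβ' hβyz hαx hxyz] at hkernel
  have hx0 := qinf_ne_zero_of_norm_lt_one hq hx1
  have hy0 := qinf_ne_zero_of_norm_lt_one hq hy1
  have hxz0 := qinf_ne_zero_of_norm_lt_one hq hxz
  have hyz0 := qinf_ne_zero_of_norm_lt_one hq hyz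
  have hαβz0 := qinf_ne_zero_of_norm_lt_one hq hαβz
  have hαβ0 := hαβ'.qinf_ne_zero hq
  have hxβ0 := hxβ.qinf_ne_zero hq
  have hβx0 := hβx.qinf_ne_zero hq
  generalize qinf q x = X at hx0 hkernel ⊢
  generalize qinf q y = Y at hy0 hkernel ⊢
  generalize qinf q (x * z) = XZ at hxz0 hkernel ⊢
  generalize qinf q (y * z) = YZ at hyz0 hkernel ⊢
  generalize qinf q (α * β * z / γ) = D at hαβz0 htriple hkernel ⊢
  generalize qinf q (α * β) = P at hαβ0 htriple hkernel ⊢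
  rw [eq_div_of_mul_eq (mul_ne_zero hαβz0 hαβ0) htriple, eq_div_of_mul_eq
    (mul_ne_zero (mul_ne_zero hx0 hy0) (mul_ne_zero hxz0 hyz0)) ((mul_comm _ _).trans hkernel)]
  field_simp
  ring

lemma norm_mul_lt_one_of_norm_le {M : ℝ} {w : ℂ} (hw : ‖w‖ ≤ M) (hM : M * ‖z‖ < 1) :
    ‖w * z‖ < 1 := by
  rw [norm_mul]
  exact (mul_le_mul_of_nonneg_right hw (norm_nonneg z)).trans_lt hM

end Evaluation

theorem ggr_q_analogue_two_4phi3 (q α β γ x y z : ℂ)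
    (hq0 : 0 < ‖q‖) (hq1 : ‖q‖ < 1)
    (hβ : β ≠ 0) (hγ : γ ≠ 0) (hx : x ≠ 0)
    (hlt1 : max (max ‖x‖ ‖y‖) ‖α * β / γ‖ < 1)
    (hlt2 : max (max ‖x‖ ‖y‖) ‖α * β / γ‖ * ‖z‖ < 1)
    (hαβ : ∀ n : ℕ, 1 ≤ n → α * β ≠ q ^ n)
    (hγq : ∀ n : ℕ, 1 ≤ n → γ ≠ q ^ n)
    (hgen : ∀ u ∈ [x, y, x / β, β / x, x * z, y * z, α * β * z / γ, α * β,
        β * y * z, q * β / x, α * x, x * y * z, q * x / β],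
      ∀ n : ℕ, u ≠ q ^ (-(n : ℤ))) :
    Summable (fun p : ℕ × ℕ × ℕ => ‖qGGRTerm q α β γ x y z p‖) ∧
    (∑' p : ℕ × ℕ × ℕ, qGGRTerm q α β γ x y z p) =
      qinf q (γ * x / β) * qinf q (q * z / γ) * qinf q (α * x * z / γ) * qinf q (β * y * z) /
          (qinf q (x / β) * qinf q (α * β * z / γ) * qinf q (x * z) * qinf q (y * z)) *
          Phi43 q β γ (α * β * z / γ) (β * y / x) (α * β) (β * y * z) (q * β / x) q +
        qinf q (q * z / γ) * qinf q β * qinf q γ * qinf q (β * y / x) * qinf q (α * x) *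
            qinf q (x * y * z) /
          (qinf q x * qinf q y * qinf q (x * z) * qinf q (y * z) * qinf q (α * β) *
            qinf q (β / x)) *
          Phi43 q x y (γ * x / β) (α * x * z / γ) (α * x) (x * y * z) (q * x / β) q := by
  have hq : q ≠ 0 := norm_pos_iff.mp hq0
  have hreg {u : ℂ} (hu : u ∈ [x, y, x / β, β / x, x * z, y * z, α * β * z / γ, α * β,
      β * y * z, q * β / x, α * x, x * y * z, q * x / β]) : QRegular q u :=
    qRegular_of_forall_ne_zpow (hgen u hu)
  have hαβ' : QRegular q (α * β) := hreg (by simp)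
  have hγq' : QRegular q (q / γ) := qRegular_div_of_forall_ne_pow hγ hγq
  have hs := summable_norm_qGGRTerm hq1 hq hγ hγq' hαβ' hlt1 hlt2
  have hxM : ‖x‖ ≤ max (max ‖x‖ ‖y‖) ‖α * β / γ‖ := le_max_of_le_left (le_max_left _ _)
  have hyM : ‖y‖ ≤ max (max ‖x‖ ‖y‖) ‖α * β / γ‖ := le_max_of_le_left (le_max_right _ _)
  have hαβz : ‖α * β * z / γ‖ < 1 := by
    rw [mul_div_right_comm]
    exact norm_mul_lt_one_of_norm_le (le_max_right _ _) hlt2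
  exact ⟨hs, tsum_qGGRTerm_eq hq1 hq hβ hγ hx hs.of_norm hγq' (hαβ'.mul_zpow_ne_one hq hαβ)
    (hxM.trans_lt hlt1) (hyM.trans_lt hlt1) (norm_mul_lt_one_of_norm_le hxM hlt2)
    (norm_mul_lt_one_of_norm_le hyM hlt2) hαβz (hreg (by simp)) (hreg (by simp))
    (hreg (by simp)) (hreg (by simp)) (hreg (by simp))⟩
end
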